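/- Let φ : S¹ → ℝ be a C^∞ function having exactly n local extremum points on the circle (n finite and positive), of which exactly s are absolute extrema. Then the following are equivalent: (i) every smooth extension of φ has a critical point in the closed unit disk B̄²; (ii) s > n/2 + 1. -/

import Mathlib

open scoped RealInnerProductSpace

noncomputable section

abbrev E2 : Type := EuclideanSpace ℝ (Fin 2)

/-- The point (cos t, sin t) on the unit circle in ℝ². -/
def sphPt (t : ℝ) : E2 := (EuclideanSpace.equiv (Fin 2) ℝ).symm ![Real.cos t, Real.sin t]

section Helpers

open Set Filter Topology


theorem antider (b : ℝ → ℝ) (hb : ContDiff ℝ (⊤ : ℕ∞) b) :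
    ∃ F : ℝ → ℝ, ContDiff ℝ (⊤ : ℕ∞) F ∧ ∀ x, HasDerivAt F (b x) x := by
  have h : ∀ x, HasDerivAt (fun u => ∫ t in (0:ℝ)..u, b t) (b x) x := fun x =>
    (hb.continuous.integral_hasStrictDerivAt 0 x).hasDerivAt
  refine ⟨_, ?_, h⟩
  rw [contDiff_infty_iff_deriv]
  refine ⟨fun x => (h x).differentiableAt, ?_⟩
  have : deriv (fun u => ∫ t in (0:ℝ)..u, b t) = b := funext fun x => (h x).deriv
  rw [this]; exact hb

structure IsProf (P : ℝ → ℝ) (a b : ℝ) : Prop where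
  sm : ContDiff ℝ (⊤ : ℕ∞) P
  lo : ∀ x, x ≤ a → P x = 0
  hi : ∀ x, b ≤ x → P x = 1
  mono : Monotone P
  pos : ∀ x ∈ Ioo a b, 0 < deriv P x

theorem IsProf.nonneg {P a b} (h : IsProf P a b) (x : ℝ) : 0 ≤ P x := by
  rw [← h.lo (min x a) (min_le_right _ _)]
  exact h.mono (min_le_left _ _)

theorem IsProf.le_one {P a b} (h : IsProf P a b) (x : ℝ) : P x ≤ 1 := by
  rw [← h.hi (max x b) (le_max_right _ _)]
  exact h.mono (le_max_left _ _)

theorem exists_prof {a b : ℝ} (hab : a < b) : ∃ P, IsProf P a b := by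
  set β : ℝ → ℝ := fun x => expNegInvGlue (x - a) * expNegInvGlue (b - x) with hβ
  have hsm : ContDiff ℝ (⊤ : ℕ∞) β := by
    apply ContDiff.mul
    · exact expNegInvGlue.contDiff.comp (by fun_prop)
    · exact expNegInvGlue.contDiff.comp (by fun_prop)
  have hnn : ∀ x, 0 ≤ β x := fun x => mul_nonneg (expNegInvGlue.nonneg _) (expNegInvGlue.nonneg _)
  have hpos : ∀ x ∈ Ioo a b, 0 < β x := fun x hx =>
    mul_pos (expNegInvGlue.pos_of_pos (by linarith [hx.1])) (expNegInvGlue.pos_of_pos (by linarith [hx.2]))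
  obtain ⟨F, hF, hd⟩ := antider β hsm
  have hdF : deriv F = β := funext fun x => (hd x).deriv
  have hm : Monotone F := monotone_of_deriv_nonneg (fun x => (hd x).differentiableAt)
    (fun x => by rw [hdF]; exact hnn x)
  have hlo : ∀ x, x ≤ a → F x = F a := by
    intro x hx
    have := constant_of_has_deriv_right_zero (f := F) (a := x) (b := a) hF.continuous.continuousOn
      (fun y hy => by
        have h0 : β y = 0 := by
          simp only [hβ]; rw [expNegInvGlue.zero_of_nonpos (by linarith [hy.2]), zero_mul]
        have := (hd y).hasDerivWithinAt (s := Ici y); rwa [h0] at this)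
    exact (this a ⟨hx, le_rfl⟩).symm
  have hhi : ∀ x, b ≤ x → F x = F b := by
    intro x hx
    have := constant_of_has_deriv_right_zero (f := F) (a := b) (b := x) hF.continuous.continuousOn
      (fun y hy => by
        have h0 : β y = 0 := by
          simp only [hβ]; rw [expNegInvGlue.zero_of_nonpos (x := b - y) (by linarith [hy.1]), mul_zero]
        have := (hd y).hasDerivWithinAt (s := Ici y); rwa [h0] at this)
    exact this x ⟨hx, le_rfl⟩
  have hlt : F a < F b := by
    have : StrictMonoOn F (Icc a b) := strictMonoOn_of_deriv_pos (convex_Icc a b)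
      hF.continuous.continuousOn (fun x hx => by
        rw [interior_Icc] at hx; rw [hdF]; exact hpos x hx)
    exact this ⟨le_rfl, hab.le⟩ ⟨hab.le, le_rfl⟩ hab
  have hd0 : 0 < F b - F a := by linarith
  refine ⟨fun x => (F x - F a) / (F b - F a), ⟨?_, ?_, ?_, ?_, ?_⟩⟩
  · exact (hF.sub contDiff_const).div_const _
  · intro x hx; simp [hlo x hx]
  · intro x hx; simp only [hhi x hx]; exact div_self hd0.ne'
  · intro x y hxy; have := hm hxy; show _ / _ ≤ _ / _; gcongr
  · intro x hx
    have : HasDerivAt (fun x => (F x - F a) / (F b - F a)) (β x / (F b - F a)) x :=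
      ((hd x).sub_const _).div_const _
    rw [this.deriv]; exact div_pos (hpos x hx) hd0

/-- profile small at an interior point -/
theorem exists_prof_small {a c b : ℝ} (hac : a < c) (hcb : c < b) {e : ℝ} (he : 0 < e) :
    ∃ P, IsProf P a b ∧ P c < e := by
  obtain ⟨P, hP⟩ := exists_prof (hac.trans hcb)
  obtain ⟨Q, hQ⟩ := exists_prof hcb
  set l := min (e/2) (1/2) with hl
  have hl0 : 0 < l := lt_min (by linarith) (by norm_num)
  have hl1 : l ≤ 1/2 := min_le_right _ _
  have hl2 : l ≤ e/2 := min_le_left _ _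
  refine ⟨fun x => l * P x + (1 - l) * Q x, ⟨?_, ?_, ?_, ?_, ?_⟩, ?_⟩
  · exact (contDiff_const.mul hP.sm).add (contDiff_const.mul hQ.sm)
  · intro x hx; simp [hP.lo x hx, hQ.lo x (by linarith)]
  · intro x hx; simp [hP.hi x hx, hQ.hi x hx]
  · intro x y hxy
    have h1 := hP.mono hxy; have h2 := hQ.mono hxy
    show _ + _ ≤ _ + _
    have : 0 ≤ 1 - l := by linarith
    gcongr
  · intro x hx
    have dP := (hP.sm.differentiable (by simp)) x
    have dQ := (hQ.sm.differentiable (by simp)) x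
    have : HasDerivAt (fun x => l * P x + (1 - l) * Q x) (l * deriv P x + (1-l) * deriv Q x) x :=
      (dP.hasDerivAt.const_mul _).add (dQ.hasDerivAt.const_mul _)
    rw [this.deriv]
    have h1 := mul_pos hl0 (hP.pos x hx)
    have h2 : 0 ≤ deriv Q x := hQ.mono.deriv_nonneg
    have : 0 ≤ (1 - l) * deriv Q x := mul_nonneg (by linarith) h2
    linarith
  · have := hP.le_one c
    simp only [hQ.lo c le_rfl]
    nlinarith

/-- reversed profile -/
theorem IsProf.rev {P a b} (h : IsProf P a b) : IsProf (fun x => 1 - P (-x)) (-b) (-a) := by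
  refine ⟨?_, ?_, ?_, ?_, ?_⟩
  · exact contDiff_const.sub (h.sm.comp contDiff_neg)
  · intro x hx; simp [h.hi (-x) (by linarith)]
  · intro x hx; simp [h.lo (-x) (by linarith)]
  · intro x y hxy; have := h.mono (neg_le_neg hxy); show 1 - _ ≤ 1 - _; linarith
  · intro x hx
    have dP := (h.sm.differentiable (by simp)) (-x)
    have : HasDerivAt (fun x => 1 - P (-x)) (-(deriv P (-x) * (-1))) x :=
      (dP.hasDerivAt.comp x (hasDerivAt_neg x)).const_sub 1
    rw [this.deriv]
    have := h.pos (-x) ⟨by linarith [hx.2], by linarith [hx.1]⟩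
    linarith

theorem exists_prof_large {a c b : ℝ} (hac : a < c) (hcb : c < b) {e : ℝ} (he : 0 < e) :
    ∃ P, IsProf P a b ∧ 1 - e < P c := by
  obtain ⟨P, hP, h⟩ := exists_prof_small (a := -b) (c := -c) (b := -a) (by linarith) (by linarith) he
  refine ⟨_, by simpa using hP.rev, ?_⟩
  show _ < 1 - P (-c)
  linarith

/-- smoothed positive part -/
theorem exists_ramp {d : ℝ} (hd : 0 < d) : ∃ m : ℝ → ℝ, ContDiff ℝ (⊤ : ℕ∞) m ∧
    (∀ s, s ≤ -d → m s = 0) ∧ (∀ s, d ≤ s → m s = s) ∧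
    (∀ s, 0 ≤ deriv m s ∧ deriv m s ≤ 1) ∧ (∀ s, s ≤ d → 0 ≤ m s ∧ m s ≤ d) := by
  obtain ⟨P, hP⟩ := exists_prof hd
  obtain ⟨F, hF, hdF⟩ := antider P hP.sm
  have hFd : deriv F = P := funext fun x => (hdF x).deriv
  have hdiff : Differentiable ℝ F := fun x => (hdF x).differentiableAt
  have hmono : Monotone F := monotone_of_deriv_nonneg hdiff (fun x => by rw [hFd]; exact hP.nonneg x)
  have hanti : Monotone (fun x => x - F x) := by
    apply monotone_of_deriv_nonneg
    · fun_prop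
    · intro x
      have : HasDerivAt (fun x => x - F x) (1 - P x) x := (hasDerivAt_id x).sub (hdF x)
      rw [this.deriv]; linarith [hP.le_one x]
  have hlo : ∀ x, x ≤ 0 → F x = F 0 := by
    intro x hx
    have := constant_of_has_deriv_right_zero (f := F) (a := x) (b := 0) hF.continuous.continuousOn
      (fun y hy => by
        have := (hdF y).hasDerivWithinAt (s := Ici y); rwa [hP.lo y hy.2.le] at this)
    exact (this 0 ⟨hx, le_rfl⟩).symm
  have hhi : ∀ x, d ≤ x → x - F x = d - F d := by
    intro x hx
    have := constant_of_has_deriv_right_zero (f := fun x => x - F x) (a := d) (b := x)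
      (continuous_id.sub hF.continuous).continuousOn
      (fun y hy => by
        have := ((hasDerivAt_id y).sub (hdF y)).hasDerivWithinAt (s := Ici y)
        rw [hP.hi y hy.1, sub_self] at this; exact this)
    exact this x ⟨hx, le_rfl⟩
  set c := d - F d + F 0 with hc
  have hc0 : 0 ≤ c := by have := hanti hd.le; simp only at this; linarith
  have hc1 : c ≤ d := by have := hmono hd.le; linarith
  refine ⟨fun s => F (s + c) - F 0, ?_, ?_, ?_, ?_, ?_⟩
  · exact (hF.comp (by fun_prop)).sub contDiff_const
  · intro s hs; simp only [hlo (s + c) (by linarith), sub_self]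
  · intro s hs; have := hhi (s + c) (by linarith); simp only; linarith
  · intro s
    have : HasDerivAt (fun s => F (s + c) - F 0) (P (s + c)) s := by
      simpa using ((hdF (s+c)).comp_add_const s c).sub_const (F 0)
    rw [this.deriv]; exact ⟨hP.nonneg _, hP.le_one _⟩
  · intro s hs
    have h1 : F (min s (-d) + c) = F 0 := hlo _ (by linarith [min_le_right s (-d)])
    have h2 := hmono (show min s (-d) + c ≤ s + c by linarith [min_le_left s (-d)])
    have h3 := hmono (show s + c ≤ d + c by linarith)
    have h4 := hhi (d + c) (by linarith)
    constructor <;> simp only <;> linarith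

theorem per_deriv {g : ℝ → ℝ} {p : ℝ} (hg : Function.Periodic g p) : Function.Periodic (deriv g) p := by
  intro x
  rw [← deriv_comp_add_const]
  congr 1; exact funext hg

theorem two_pi_pos' : 0 < 2 * Real.pi := Real.two_pi_pos

/-- compactness for periodic functions -/
theorem per_bound {h : ℝ → ℝ} (hc : Continuous h) (hp : Function.Periodic h (2 * Real.pi)) :
    ∃ C > 0, ∀ x, |h x| ≤ C := by
  obtain ⟨C, hC⟩ := (isCompact_Icc (a := (0:ℝ)) (b := 2 * Real.pi)).exists_bound_of_continuousOn hc.continuousOn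
  refine ⟨max C 1, by positivity, fun x => ?_⟩
  obtain ⟨y, hy, hxy⟩ := hp.exists_mem_Ico₀ two_pi_pos' x
  rw [hxy]
  exact (hC y (Ico_subset_Icc_self hy)).trans (le_max_left _ _)

/-- if `h ≠ 0` wherever `k ≤ 0`, uniformly -/
theorem per_sep {h k : ℝ → ℝ} (hc : Continuous h) (kc : Continuous k)
    (hp : Function.Periodic h (2 * Real.pi)) (kp : Function.Periodic k (2 * Real.pi))
    (H : ∀ x, k x ≤ 0 → h x ≠ 0) :
    ∃ c > 0, ∀ x, k x ≤ 0 → c ≤ |h x| := by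
  set K := Icc (0:ℝ) (2 * Real.pi) ∩ {x | k x ≤ 0} with hK
  have hKc : IsCompact K := isCompact_Icc.inter_right (isClosed_le kc continuous_const)
  have key : ∃ c > 0, ∀ x ∈ K, c ≤ |h x| := by
    rcases K.eq_empty_or_nonempty with he | hne
    · exact ⟨1, one_pos, by simp [he]⟩
    · obtain ⟨z, hz, hmin⟩ := hKc.exists_isMinOn hne (f := fun x => |h x|) hc.abs.continuousOn
      exact ⟨|h z|, abs_pos.2 (H z hz.2), fun x hx => hmin hx⟩
  obtain ⟨c, c0, hcK⟩ := key
  refine ⟨c, c0, fun x hx => ?_⟩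
  have hpp : Function.Periodic (fun x => (h x, k x)) (2 * Real.pi) := fun x => by
    simp only [hp x, kp x]
  obtain ⟨y, hy, hxy⟩ := hpp.exists_mem_Ico₀ two_pi_pos' x
  simp only [Prod.mk.injEq] at hxy
  rw [hxy.1]; exact hcK y ⟨Ico_subset_Icc_self hy, by rw [hxy.2] at hx; exact hx⟩


def NC (H : ℝ × ℝ → ℝ) (t x : ℝ) : Prop :=
  ¬ (deriv (fun s => H (s, x)) t = 0 ∧ deriv (fun z => H (t, z)) x = 0)

structure FlD (g w : ℝ → ℝ) (H : ℝ × ℝ → ℝ) (T A B μ ε : ℝ) : Prop where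
  sm : ContDiff ℝ (⊤ : ℕ∞) H
  hT : 0 < T
  hB : 0 < B
  hε : 0 < ε
  per : ∀ t x, H (t, x + 2 * Real.pi) = H (t, x)
  ini : ∀ t < ε, ∀ x, H (t, x) = g x + t * w x
  fin : ∀ t ≥ T, ∀ x, H (t, x) = A + B * (T + 1 - t) * Real.cos (x - μ)
  nc : ∀ t ∈ Icc 0 T, ∀ x, NC H t x

def Fl (g w : ℝ → ℝ) : Prop := ∃ H T A B μ ε, FlD g w H T A B μ ε

theorem fl_base (A B μ : ℝ) (hB : 0 < B) :
    Fl (fun x => A + 2 * B * Real.cos (x - μ)) (fun x => - (B * Real.cos (x - μ))) := by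
  refine ⟨fun p => A + B * (2 - p.1) * Real.cos (p.2 - μ), 1, A, B, μ, 1, ?_, one_pos, hB, one_pos, ?_, ?_, ?_, ?_⟩
  · have : ContDiff ℝ (⊤ : ℕ∞) (fun p : ℝ × ℝ => Real.cos (p.2 - μ)) :=
      Real.contDiff_cos.comp (contDiff_snd.sub contDiff_const)
    exact contDiff_const.add ((contDiff_const.mul (contDiff_const.sub contDiff_fst)).mul this)
  · intro t x
    have : x + 2 * Real.pi - μ = x - μ + 2 * Real.pi := by ring
    simp only [this, Real.cos_add_two_pi]
  · intro t _ x; simp only; ring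
  · intro t _ x; simp only; ring
  · rintro t ⟨h0, h1⟩ x ⟨e1, e2⟩
    have d1 : HasDerivAt (fun s => A + B * (2 - s) * Real.cos (x - μ)) (B * (-1) * Real.cos (x - μ)) t :=
      ((((hasDerivAt_id t).const_sub 2).const_mul B).mul_const _).const_add A
    have d2 : HasDerivAt (fun z => A + B * (2 - t) * Real.cos (z - μ)) (B * (2 - t) * (-Real.sin (x - μ))) x := by
      have := (Real.hasDerivAt_cos (x - μ)).comp_sub_const x μ
      exact (this.const_mul _).const_add A
    simp only [d1.deriv] at e1
    simp only [d2.deriv] at e2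
    have hc : Real.cos (x - μ) = 0 := by
      have : B * Real.cos (x - μ) = 0 := by linarith
      exact (mul_eq_zero.1 this).resolve_left hB.ne'
    have hs : Real.sin (x - μ) = 0 := by
      have : (B * (2 - t)) * Real.sin (x - μ) = 0 := by linarith
      refine (mul_eq_zero.1 this).resolve_left (mul_pos hB (by linarith)).ne'
    have := Real.sin_sq_add_cos_sq (x - μ)
    rw [hc, hs] at this; norm_num at this

theorem Fl.per_g {g w} (h : Fl g w) : Function.Periodic g (2 * Real.pi) := by
  obtain ⟨H, T, A, B, μ, ε, h⟩ := h
  intro x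
  have := h.per 0 x
  rw [h.ini 0 h.hε, h.ini 0 h.hε] at this; simpa using this

theorem Fl.sm_g {g w} (h : Fl g w) : ContDiff ℝ (⊤ : ℕ∞) g := by
  obtain ⟨H, T, A, B, μ, ε, h⟩ := h
  have : g = fun x => H (0, x) := by funext x; rw [h.ini 0 h.hε]; ring
  rw [this]; exact h.sm.comp (contDiff_const.prodMk contDiff_id)

theorem Fl.w_eq {g w H T A B μ ε} (h : FlD g w H T A B μ ε) :
    w = fun x => (H (ε/2, x) - H (0, x)) * (2 / ε) := by
  have := h.hε
  funext x; rw [h.ini 0 this, h.ini (ε/2) (by linarith)]; field_simp; ring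

theorem Fl.per_w {g w} (h : Fl g w) : Function.Periodic w (2 * Real.pi) := by
  obtain ⟨H, T, A, B, μ, ε, h⟩ := h
  rw [Fl.w_eq h]
  intro x; simp only [h.per]

theorem Fl.sm_w {g w} (h : Fl g w) : ContDiff ℝ (⊤ : ℕ∞) w := by
  obtain ⟨H, T, A, B, μ, ε, h⟩ := h
  rw [Fl.w_eq h]
  have : ∀ c, ContDiff ℝ (⊤ : ℕ∞) (fun x => H (c, x)) := fun c =>
    h.sm.comp (contDiff_const.prodMk contDiff_id)
  exact ((this _).sub (this _)).mul contDiff_const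

theorem fl_step {g G σ : ℝ → ℝ} (hG : Fl G σ) (hg : ContDiff ℝ (⊤ : ℕ∞) g)
    (hper : Function.Periodic g (2 * Real.pi))
    (h1 : ∀ x, deriv G x = 0 → 0 < σ x * (G x - g x))
    (h2 : ∀ x, g x = G x → 0 < deriv g x * deriv G x) : Fl g (fun x => G x - g x) := by
  have hGs := hG.sm_g
  have hσs := hG.sm_w
  have hGp := hG.per_g
  have hσp := hG.per_w
  obtain ⟨H, T, A, B, μ, ε, h⟩ := hG
  set w : ℝ → ℝ := fun x => G x - g x with hw
  have hws : ContDiff ℝ (⊤ : ℕ∞) w := hGs.sub hg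
  have hwp : Function.Periodic w (2 * Real.pi) := fun x => by simp only [hw, hGp x, hper x]
  have hdw : ∀ x, HasDerivAt w (deriv w x) x := fun x => ((hws.differentiable (by simp)) x).hasDerivAt
  have hdσ : ∀ x, HasDerivAt σ (deriv σ x) x := fun x => ((hσs.differentiable (by simp)) x).hasDerivAt
  have hdG : ∀ x, HasDerivAt G (deriv G x) x := fun x => ((hGs.differentiable (by simp)) x).hasDerivAt
  have hdg : ∀ x, HasDerivAt g (deriv g x) x := fun x => ((hg.differentiable (by simp)) x).hasDerivAt
  have hdw' : ∀ x, deriv w x = deriv G x - deriv g x := fun x => ((hdG x).sub (hdg x)).deriv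
  -- separation
  obtain ⟨c, c0, hc⟩ := per_sep (h := deriv G) (k := fun x => σ x * w x)
    (hGs.continuous_deriv (by simp)) (hσs.continuous.mul hws.continuous) (per_deriv hGp)
    (fun x => by simp only [hσp x, hwp x])
    (fun x hx he => by have := h1 x he; simp only [hw] at hx; linarith)
  obtain ⟨C1, C10, hC1⟩ := per_bound (hws.continuous_deriv (by simp)) (per_deriv hwp)
  obtain ⟨C2, C20, hC2⟩ := per_bound (hσs.continuous_deriv (by simp)) (per_deriv hσp)
  have hε := h.hε
  have hT := h.hT
  obtain ⟨d, d0, hd1, hd2, hd3, hd4⟩ : ∃ d > 0, d < ε ∧ d ≤ T ∧ d < 1 ∧ d * (2 * C1 + C2) < c := by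
    have hq : 0 < c / (2 * C1 + C2) := by positivity
    refine ⟨min (min (ε/2) T) (min (1/2) (c / (2 * C1 + C2) / 2)), ?_, ?_, ?_, ?_, ?_⟩
    · positivity
    · calc _ ≤ ε/2 := (min_le_left _ _).trans (min_le_left _ _)
        _ < ε := by linarith
    · exact (min_le_left _ _).trans (min_le_right _ _)
    · calc _ ≤ (1:ℝ)/2 := (min_le_right _ _).trans (min_le_left _ _)
        _ < 1 := by norm_num
    · have : min (min (ε/2) T) (min (1/2) (c / (2 * C1 + C2) / 2)) < c / (2 * C1 + C2) := by
        calc _ ≤ c / (2 * C1 + C2) / 2 := (min_le_right _ _).trans (min_le_right _ _)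
          _ < _ := by linarith
      rwa [lt_div_iff₀ (by positivity)] at this
  obtain ⟨m, hms, hm0, hm1, hmd, hmb⟩ := exists_ramp d0
  have hdm : ∀ x, HasDerivAt m (deriv m x) x := fun x => ((hms.differentiable (by simp)) x).hasDerivAt
  set F : ℝ × ℝ → ℝ := fun p => G p.2 + (p.1 - 1) * w p.2 + m (p.1 - 1) * (σ p.2 - w p.2) with hF
  set K : ℝ × ℝ → ℝ := fun p => if p.1 < 1 + d then F p else H (p.1 - 1, p.2) with hK
  have hFs : ContDiff ℝ (⊤ : ℕ∞) F := by
    have a1 : ContDiff ℝ (⊤ : ℕ∞) (fun p : ℝ × ℝ => p.1 - 1) := contDiff_fst.sub contDiff_const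
    exact ((hGs.comp contDiff_snd).add (a1.mul (hws.comp contDiff_snd))).add
      ((hms.comp a1).mul ((hσs.comp contDiff_snd).sub (hws.comp contDiff_snd)))
  have hHs : ContDiff ℝ (⊤ : ℕ∞) (fun p : ℝ × ℝ => H (p.1 - 1, p.2)) :=
    h.sm.comp ((contDiff_fst.sub contDiff_const).prodMk contDiff_snd)
  have hKF : ∀ t < 1 + ε, ∀ x, K (t, x) = F (t, x) := by
    intro t ht x
    simp only [hK]
    split_ifs with hlt
    · rfl
    · rw [h.ini _ (by linarith)]; simp only [hF]; rw [hm1 _ (by linarith)]; ring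
  have hKH : ∀ t, 1 + d ≤ t → ∀ x, K (t, x) = H (t - 1, x) := by
    intro t ht x; simp only [hK]; rw [if_neg (by linarith)]
  refine ⟨K, T + 1, A, B, μ, 1 - d, ?_, by linarith, h.hB, by linarith, ?_, ?_, ?_, ?_⟩
  · rw [contDiff_iff_contDiffAt]
    rintro ⟨t, x⟩
    by_cases ht : t < 1 + ε
    · refine hFs.contDiffAt.congr_of_eventuallyEq ?_
      have : ∀ᶠ p : ℝ × ℝ in 𝓝 (t, x), p.1 < 1 + ε :=
        continuous_fst.continuousAt.eventually (gt_mem_nhds ht)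
      filter_upwards [this] with p hp using hKF p.1 hp p.2
    · refine hHs.contDiffAt.congr_of_eventuallyEq ?_
      have : ∀ᶠ p : ℝ × ℝ in 𝓝 (t, x), 1 + d < p.1 :=
        continuous_fst.continuousAt.eventually (lt_mem_nhds (by simp only; linarith))
      filter_upwards [this] with p hp using hKH p.1 hp.le p.2
  · intro t x
    simp only [hK, hF, hGp x, hwp x, hσp x, h.per]
  · intro t ht x
    rw [hKF t (by linarith)]
    simp only [hF, hm0 (t - 1) (by linarith), hw]; ring
  · intro t ht x
    rw [hKH t (by linarith), h.fin _ (by linarith)]; ring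
  · rintro t ⟨ht0, htT⟩ x ⟨e1, e2⟩
    by_cases htd : t ≤ 1 + d
    · have ht : t < 1 + ε := by linarith
      have d1 : HasDerivAt (fun s => K (s, x)) (w x + deriv m (t - 1) * (σ x - w x)) t := by
        have : HasDerivAt (fun s => F (s, x)) (1 * w x + deriv m (t - 1) * (σ x - w x)) t := by
          simp only [hF]
          exact ((((hasDerivAt_id t).sub_const 1).mul_const (w x)).const_add (G x)).add
            (((hdm (t-1)).comp_sub_const t 1).mul_const _)
        rw [one_mul] at this
        refine this.congr_of_eventuallyEq ?_
        filter_upwards [gt_mem_nhds ht] with s hs using hKF s hs x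
      have d2 : HasDerivAt (fun z => K (t, z))
          (deriv G x + (t - 1) * deriv w x + m (t - 1) * (deriv σ x - deriv w x)) x := by
        have : (fun z => K (t, z)) = fun z => F (t, z) := funext fun z => hKF t ht z
        rw [this]; simp only [hF]
        exact ((hdG x).add ((hdw x).const_mul _)).add (((hdσ x).sub (hdw x)).const_mul _)
      rw [d1.deriv] at e1
      rw [d2.deriv] at e2
      by_cases hlow : t < 1 - d
      · have hmz : m (t - 1) = 0 := hm0 _ (by linarith)
        have hmz' : deriv m (t-1) = 0 := by
          have : m =ᶠ[𝓝 (t-1)] fun _ => (0:ℝ) := by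
            filter_upwards [gt_mem_nhds (show t - 1 < -d by linarith)] with s hs using hm0 s hs.le
          rw [this.deriv_eq]; simp
        rw [hmz', zero_mul, add_zero] at e1
        rw [hmz, zero_mul, add_zero, hdw' x] at e2
        have hh := h2 x (by simp only [hw] at e1; linarith)
        have e3 : t * (deriv g x * deriv G x) + (1 - t) * (deriv g x * deriv g x) = 0 := by
          linear_combination (deriv g x) * e2
        have hsq : 0 < deriv g x * deriv g x := mul_self_pos.2 (left_ne_zero_of_mul hh.ne')
        rcases ht0.eq_or_lt with h0 | h0
        · rw [← h0] at e3; linarith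
        · have i1 := mul_pos h0 hh
          have i2 := mul_pos (show 0 < 1 - t by linarith) hsq
          linarith
      · push Not at hlow
        by_cases hpos : 0 < σ x * w x
        · obtain ⟨q0, q1⟩ := hmd (t - 1)
          set q := deriv m (t - 1)
          have e3 : (1 - q) * (w x * w x) + q * (σ x * w x) = 0 := by
            linear_combination (w x) * e1
          have hsq : 0 < w x * w x := mul_self_pos.2 (right_ne_zero_of_mul hpos.ne')
          rcases q0.eq_or_lt with h0 | h0
          · rw [← h0] at e3; linarith
          · have i1 := mul_pos h0 hpos
            have i2 := mul_nonneg (show 0 ≤ 1 - q by linarith) hsq.le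
            linarith
        · have hcx := hc x (not_lt.1 hpos)
          obtain ⟨m0, m1⟩ := hmb (t - 1) (by linarith)
          have e3 : deriv G x = -((t - 1) * deriv w x) - m (t-1) * (deriv σ x - deriv w x) := by linarith
          have b1 : |(t - 1) * deriv w x| ≤ d * C1 := by
            rw [abs_mul]
            exact mul_le_mul (abs_le.2 ⟨by linarith, by linarith⟩) (hC1 x) (abs_nonneg _) d0.le
          have b2 : |m (t-1) * (deriv σ x - deriv w x)| ≤ d * (C2 + C1) := by
            rw [abs_mul]
            refine mul_le_mul (abs_le.2 ⟨by linarith, by linarith⟩) ?_ (abs_nonneg _) d0.le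
            exact (abs_sub _ _).trans (add_le_add (hC2 x) (hC1 x))
          have b3 : |deriv G x| ≤ d * C1 + d * (C2 + C1) := by
            rw [e3]
            refine (abs_sub _ _).trans ?_
            rw [abs_neg]; exact add_le_add b1 b2
          linarith
    · have d1 : (fun s => K (s, x)) =ᶠ[𝓝 t] (fun s => H (s - 1, x)) := by
        filter_upwards [lt_mem_nhds (show 1 + d < t by linarith)] with s hs using hKH s hs.le x
      rw [d1.deriv_eq] at e1
      have d2 : (fun z => K (t, z)) = fun z => H (t - 1, z) := funext fun z => hKH t (by linarith) z
      rw [d2] at e2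
      refine h.nc (t - 1) ⟨by linarith, by linarith⟩ x ⟨?_, e2⟩
      rw [← e1]; exact (deriv_comp_sub_const (fun s => H (s, x)) 1 t).symm


theorem sphPt_zero (t : ℝ) : sphPt t 0 = Real.cos t := by simp [sphPt]
theorem sphPt_one (t : ℝ) : sphPt t 1 = Real.sin t := by simp [sphPt]

theorem sphPt_norm (t : ℝ) : ‖sphPt t‖ = 1 := by
  rw [EuclideanSpace.norm_eq]; simp [sphPt_zero, sphPt_one]

def toC (x : E2) : ℂ := ⟨x 0, x 1⟩

theorem toC_norm (x : E2) : ‖toC x‖ = ‖x‖ := by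
  rw [EuclideanSpace.norm_eq, Complex.norm_def, Complex.normSq_apply]
  simp [toC, pow_two]

theorem toC_neg (x : E2) : toC (-x) = - toC x := by
  apply Complex.ext <;> simp [toC]

theorem toC_contDiff : ContDiff ℝ (⊤ : ℕ∞) toC := by
  have : toC = fun x : E2 => ((x 0 : ℝ) : ℂ) + ((x 1 : ℝ) : ℂ) * Complex.I := by
    funext x; apply Complex.ext <;> simp [toC]
  rw [this]
  have h : ∀ i : Fin 2, ContDiff ℝ (⊤ : ℕ∞) (fun x : E2 => ((x i : ℝ) : ℂ)) := fun i =>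
    Complex.ofRealCLM.contDiff.comp (EuclideanSpace.proj (𝕜 := ℝ) i).contDiff
  exact (h 0).add ((h 1).mul contDiff_const)

theorem toC_ne {x : E2} (hx : x ≠ 0) : toC x ≠ 0 := by
  rw [← norm_ne_zero_iff, toC_norm, norm_ne_zero_iff]; exact hx

def ag (x : E2) : ℝ := (toC x).arg

theorem eq_smul_sphPt (x : E2) : x = ‖x‖ • sphPt (ag x) := by
  ext i; fin_cases i
  · simp [sphPt_zero, ag, ← toC_norm, Complex.norm_mul_cos_arg]; rfl
  · simp [sphPt_one, ag, ← toC_norm, Complex.norm_mul_sin_arg]; rfl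

theorem ag_contDiffAt {x : E2} (hx : toC x ∈ Complex.slitPlane) : ContDiffAt ℝ (⊤ : ℕ∞) ag x := by
  have h : ContDiffAt ℝ (⊤ : ℕ∞) (fun x => Complex.log (toC x)) x :=
    ((Complex.contDiffAt_log hx).restrict_scalars ℝ).comp x toC_contDiff.contDiffAt
  have h2 := (Complex.imCLM.contDiff (n := (⊤ : ℕ∞))).contDiffAt.comp x h
  refine h2.congr_of_eventuallyEq (Eventually.of_forall fun y => ?_)
  simp [ag, Complex.log_im]

theorem per_angle {g : ℝ → ℝ} (hp : Function.Periodic g (2 * Real.pi)) {a b : ℝ}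
    (h : (a : Real.Angle) = b) : g a = g b := by
  obtain ⟨k, hk⟩ := Real.Angle.angle_eq_iff_two_pi_dvd_sub.1 h
  have : a = b + k * (2 * Real.pi) := by linarith
  rw [this]; exact hp.int_mul k b

theorem ag_smul_sphPt {r : ℝ} (hr : 0 < r) (z : ℝ) : ((ag (r • sphPt z) : ℝ) : Real.Angle) = z := by
  have : toC (r • sphPt z) = r * ((Real.Angle.cos z : ℝ) + (Real.Angle.sin z : ℝ) * Complex.I) := by
    apply Complex.ext <;> simp [toC, sphPt_zero, sphPt_one, Complex.cos_ofReal_re, Complex.sin_ofReal_re]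
  rw [ag, this, Complex.arg_real_mul _ hr, Complex.arg_cos_add_sin_mul_I_coe_angle]

theorem polar_contDiffAt {H : ℝ × ℝ → ℝ} (hs : ContDiff ℝ (⊤ : ℕ∞) H)
    (hp : ∀ t x, H (t, x + 2 * Real.pi) = H (t, x)) (c : ℝ) {x : E2} (hx : x ≠ 0) :
    ContDiffAt ℝ (⊤ : ℕ∞) (fun x : E2 => H (c * (1 - ‖x‖), ag x)) x := by
  have hr : ContDiffAt ℝ (⊤ : ℕ∞) (fun x : E2 => c * (1 - ‖x‖)) x :=
    contDiffAt_const.mul (contDiffAt_const.sub (contDiffAt_norm ℝ hx))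
  by_cases hsl : toC x ∈ Complex.slitPlane
  · exact hs.contDiffAt.comp x (hr.prodMk (ag_contDiffAt hsl))
  · have hsl' : toC (-x) ∈ Complex.slitPlane := by
      rw [Complex.mem_slitPlane_iff] at hsl ⊢
      push Not at hsl
      rw [toC_neg]
      left
      have : (toC x).re ≠ 0 := fun h0 => toC_ne hx (Complex.ext h0 hsl.2)
      have := lt_of_le_of_ne hsl.1 this
      simpa using this
    have h1 : ContDiffAt ℝ (⊤ : ℕ∞) (fun y => ag (-y) + Real.pi) x :=
      ((ag_contDiffAt hsl').comp x contDiff_neg.contDiffAt).add contDiffAt_const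
    have h2 := hs.contDiffAt.comp x (hr.prodMk h1)
    refine h2.congr_of_eventuallyEq ?_
    filter_upwards [isOpen_ne.mem_nhds hx] with y hy
    refine per_angle (g := fun z => H (c * (1 - ‖y‖), z)) (fun z => hp _ z) ?_
    rw [Real.Angle.coe_add, ag, ag, toC_neg, Complex.arg_neg_coe_angle (toC_ne hy), add_assoc]
    simp

theorem hasDerivAt_sphPt (z : ℝ) : ∃ v, HasDerivAt sphPt v z := by
  have : Differentiable ℝ sphPt := by
    apply (EuclideanSpace.equiv (Fin 2) ℝ).symm.differentiable.comp
    rw [differentiable_pi]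
    intro i; fin_cases i
    · simp [Real.differentiable_cos]
    · simp [Real.differentiable_sin]
  exact ⟨_, (this z).hasDerivAt⟩

theorem fl_extend {g w : ℝ → ℝ} (h : Fl g w) : ∃ f : E2 → ℝ, ContDiff ℝ (⊤ : ℕ∞) f ∧
    (∀ t, f (sphPt t) = g t) ∧ ∀ x ∈ Metric.closedBall (0 : E2) 1, fderiv ℝ f x ≠ 0 := by
  obtain ⟨H, T, A, B, μ, ε, h⟩ := h
  have hT := h.hT
  have hB := h.hB
  set c := T + 1 with hc
  have hc0 : 0 < c := by linarith
  set lin : E2 →L[ℝ] ℝ := (B * c) • (Real.cos μ • EuclideanSpace.proj (𝕜 := ℝ) (0 : Fin 2) + Real.sin μ • EuclideanSpace.proj (𝕜 := ℝ) (1 : Fin 2)) with hlin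
  have hlinv : ∀ r z, lin (r • sphPt z) = B * c * r * Real.cos (z - μ) := by
    intro r z
    simp [hlin, sphPt_zero, sphPt_one, Real.cos_sub]; ring
  set ρ := 1 / (2 * c) with hρ
  have hρ0 : 0 < ρ := by positivity
  set f : E2 → ℝ := fun x => if ‖x‖ < ρ then A + lin x else H (c * (1 - ‖x‖), ag x) with hf
  have agree : ∀ r > 0, r ≤ 1 / c → ∀ z, H (c * (1 - r), z) = A + lin (r • sphPt z) := by
    intro r hr hrc z
    rw [le_div_iff₀ hc0] at hrc
    rw [h.fin _ (by linarith : c * (1 - r) ≥ T), hlinv]; ring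
  have hρc : ρ < 1 / c := by
    rw [hρ]; apply one_div_lt_one_div_of_lt hc0; linarith
  have f_pol : ∀ x, x ≠ 0 → f x = H (c * (1 - ‖x‖), ag x) := by
    intro x hx
    simp only [hf]; split_ifs with hlt
    · rw [agree ‖x‖ (norm_pos_iff.2 hx) (by linarith), ← eq_smul_sphPt]
    · rfl
  have f_lin : ∀ x, ‖x‖ < 1 / c → f x = A + lin x := by
    intro x hx
    by_cases h0 : x = 0
    · subst h0; simp [hf, hρ0]
    · rw [f_pol x h0, agree ‖x‖ (norm_pos_iff.2 h0) hx.le, ← eq_smul_sphPt]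
  have f_rz : ∀ r > 0, ∀ z, f (r • sphPt z) = H (c * (1 - r), z) := by
    intro r hr z
    have hn : ‖r • sphPt z‖ = r := by rw [norm_smul, sphPt_norm, mul_one, Real.norm_of_nonneg hr.le]
    rw [f_pol _ (by rw [← norm_pos_iff, hn]; exact hr), hn]
    exact per_angle (g := fun z => H (c * (1 - r), z)) (fun z => h.per _ z) (ag_smul_sphPt hr z)
  have f_sm : ContDiff ℝ (⊤ : ℕ∞) f := by
    rw [contDiff_iff_contDiffAt]
    intro x
    by_cases h0 : x = 0
    · have : ContDiff ℝ (⊤ : ℕ∞) (fun x => A + lin x) := contDiff_const.add lin.contDiff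
      refine this.contDiffAt.congr_of_eventuallyEq ?_
      have : ∀ᶠ y in 𝓝 x, ‖y‖ < 1 / c := continuous_norm.continuousAt.eventually
        (gt_mem_nhds (by simp only [h0, norm_zero]; positivity))
      filter_upwards [this] with y hy using f_lin y hy
    · refine (polar_contDiffAt h.sm h.per c h0).congr_of_eventuallyEq ?_
      filter_upwards [isOpen_ne.mem_nhds h0] with y hy using f_pol y hy
  refine ⟨f, f_sm, ?_, ?_⟩
  · intro t
    have := f_rz 1 one_pos t
    rw [one_smul, sub_self, mul_zero, h.ini 0 h.hε] at this
    rw [this]; ring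
  · intro x hx he
    rw [mem_closedBall_zero_iff] at hx
    have hfd : HasFDerivAt f (0 : E2 →L[ℝ] ℝ) x := by
      rw [← he]; exact (f_sm.differentiable (by simp) x).hasFDerivAt
    by_cases hsmall : ‖x‖ < 1 / c
    · have h1 : HasFDerivAt f lin x := by
        refine (lin.hasFDerivAt.const_add A).congr_of_eventuallyEq ?_
        filter_upwards [continuous_norm.continuousAt.eventually (gt_mem_nhds hsmall)] with y hy using f_lin y hy
      have h2 := h1.unique hfd
      have h3 := hlinv 1 μ
      rw [h2] at h3
      simp at h3
      rcases h3 with h3 | h3 <;> linarith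
    · push Not at hsmall
      have hr0 : 0 < ‖x‖ := lt_of_lt_of_le (by positivity) hsmall
      set z := ag x with hz
      have hxe : x = ‖x‖ • sphPt z := eq_smul_sphPt x
      set t := c * (1 - ‖x‖) with ht
      have hrt : ‖x‖ = 1 - t / c := by rw [ht]; field_simp; ring
      have ht0 : 0 ≤ t := mul_nonneg hc0.le (by linarith)
      have htT : t ≤ T := by
        rw [div_le_iff₀ hc0] at hsmall; rw [ht]; nlinarith
      refine h.nc t ⟨ht0, htT⟩ z ⟨?_, ?_⟩
      · have hcurve : HasDerivAt (fun s : ℝ => (1 - s / c) • sphPt z) ((-(1/c)) • sphPt z) t :=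
          (((hasDerivAt_id t).div_const c).const_sub 1).smul_const _
        have hfd' : HasFDerivAt f (0 : E2 →L[ℝ] ℝ) ((1 - t / c) • sphPt z) := by
          rw [← hrt, ← hxe]; exact hfd
        have hcomp := hfd'.comp_hasDerivAt t hcurve
        have : (fun s => H (s, z)) =ᶠ[𝓝 t] (f ∘ fun s : ℝ => (1 - s / c) • sphPt z) := by
          have : ∀ᶠ s in 𝓝 t, s < c := gt_mem_nhds (by linarith)
          filter_upwards [this] with s hs
          simp only [Function.comp]
          rw [f_rz _ (by have := (div_lt_one hc0).2 hs; linarith)]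
          congr 2; field_simp; ring
        rw [this.deriv_eq, hcomp.deriv]; simp
      · obtain ⟨v, hv⟩ := hasDerivAt_sphPt z
        have hcurve : HasDerivAt (fun s : ℝ => ‖x‖ • sphPt s) (‖x‖ • v) z := hv.const_smul ‖x‖
        have hfd' : HasFDerivAt f (0 : E2 →L[ℝ] ℝ) (‖x‖ • sphPt z) := by
          rw [← hxe]; exact hfd
        have hcomp := hfd'.comp_hasDerivAt z hcurve
        have : (fun s => H (t, s)) = (f ∘ fun s : ℝ => ‖x‖ • sphPt s) := by
          funext s
          simp only [Function.comp]
          rw [f_rz _ hr0]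
        rw [this, hcomp.deriv]; simp


structure Knots (θ : ℕ → ℝ) (n : ℕ) : Prop where
  lt : ∀ i < n, θ i < θ (i + 1)
  tot : θ n = θ 0 + 2 * Real.pi

theorem Knots.le {θ n} (h : Knots θ n) {i j : ℕ} (hij : i ≤ j) (hj : j ≤ n) : θ i ≤ θ j := by
  induction j, hij using Nat.le_induction with
  | base => exact le_rfl
  | succ k hk ih => exact (ih (by omega)).trans (h.lt k (by omega)).le

theorem Knots.slt {θ n} (h : Knots θ n) {i j : ℕ} (hij : i < j) (hj : j ≤ n) : θ i < θ j :=
  (h.lt i (by omega)).trans_le (h.le hij hj)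

theorem Knots.pos {θ n} (h : Knots θ n) : 0 < n := by
  rcases Nat.eq_zero_or_pos n with h0 | h0
  · have := h.tot; rw [h0] at this; linarith [Real.pi_pos]
  · exact h0

theorem find_arc (θ : ℕ → ℝ) (x : ℝ) : ∀ n, x ∈ Ico (θ 0) (θ n) → ∃ j < n, x ∈ Ico (θ j) (θ (j + 1)) := by
  intro n
  induction n with
  | zero => intro h; exact absurd h.2 (not_lt.2 h.1)
  | succ k ih =>
    intro h
    by_cases hx : x < θ k
    · obtain ⟨j, hj, hj'⟩ := ih ⟨h.1, hx⟩
      exact ⟨j, by omega, hj'⟩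
    · exact ⟨k, by omega, not_lt.1 hx, h.2⟩

theorem Knots.ind {θ n} (h : Knots θ n) {Q : ℝ → Prop} (hQ : ∀ x, Q (x + 2 * Real.pi) ↔ Q x)
    (H : ∀ j < n, ∀ x ∈ Ico (θ j) (θ (j + 1)), Q x) (x : ℝ) : Q x := by
  have hp : Function.Periodic Q (2 * Real.pi) := fun x => propext (hQ x)
  obtain ⟨y, hy, hxy⟩ := hp.exists_mem_Ico two_pi_pos' x (θ 0)
  rw [hxy]
  rw [← h.tot] at hy
  obtain ⟨j, hj, hjy⟩ := find_arc θ y n hy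
  exact H j hj y hjy

theorem periodize {F : ℝ → ℝ} (hF : ContDiff ℝ (⊤ : ℕ∞) F) {a C : ℝ} (hlo : ∀ x ≤ a, F x = C)
    (hhi : ∀ x, a + 2 * Real.pi ≤ x → F x = C) :
    ∃ G : ℝ → ℝ, ContDiff ℝ (⊤ : ℕ∞) G ∧ Function.Periodic G (2 * Real.pi) ∧
      ∀ x ∈ Icc a (a + 2 * Real.pi), G x = F x := by
  set G : ℝ → ℝ := fun x => F (toIcoMod two_pi_pos' a x) with hG
  have hper : Function.Periodic G (2 * Real.pi) := fun x => by
    simp only [hG, toIcoMod_add_right]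
  have hin : ∀ x ∈ Ico a (a + 2 * Real.pi), G x = F x := fun x hx => by
    simp only [hG, (toIcoMod_eq_self two_pi_pos').2 hx]
  have hloc : ∀ x ∈ Ioo (a - 2 * Real.pi) (a + 2 * Real.pi), G x = F x + F (x + 2 * Real.pi) - C := by
    intro x hx
    by_cases hxa : a ≤ x
    · rw [hin x ⟨hxa, hx.2⟩, hhi (x + 2 * Real.pi) (by linarith)]; ring
    · push Not at hxa
      rw [← hper x, hin (x + 2 * Real.pi) ⟨by linarith [hx.1], by linarith⟩, hlo x hxa.le]; ring
  have hs : ContDiff ℝ (⊤ : ℕ∞) (fun x => F x + F (x + 2 * Real.pi) - C) :=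
    (hF.add (hF.comp (by fun_prop))).sub contDiff_const
  have hsm : ∀ x ∈ Ioo (a - 2 * Real.pi) (a + 2 * Real.pi), ContDiffAt ℝ (⊤ : ℕ∞) G x := fun x hx =>
    hs.contDiffAt.congr_of_eventuallyEq (by
      filter_upwards [isOpen_Ioo.mem_nhds hx] with y hy using hloc y hy)
  refine ⟨G, ?_, hper, ?_⟩
  · rw [contDiff_iff_contDiffAt]
    intro x
    have hpp : Function.Periodic (fun x => ContDiffAt ℝ (⊤ : ℕ∞) G x) (2 * Real.pi) := by
      intro x
      have e : G = fun y => G (y + 2 * Real.pi) := funext fun y => (hper y).symm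
      have e' : G = fun y => G (y - 2 * Real.pi) := funext fun y => by
        rw [← hper (y - 2 * Real.pi), sub_add_cancel]
      apply propext
      constructor
      · intro hx; rw [e]
        exact ContDiffAt.comp (f := fun y => y + 2 * Real.pi) x hx (by fun_prop)
      · intro hx; rw [e']
        have hx' : ContDiffAt ℝ (⊤ : ℕ∞) G ((fun y => y - 2 * Real.pi) (x + 2 * Real.pi)) := by
          simpa using hx
        exact ContDiffAt.comp (f := fun y => y - 2 * Real.pi) (x + 2 * Real.pi) hx' (by fun_prop)
    obtain ⟨y, hy, hxy⟩ := hpp.exists_mem_Ico two_pi_pos' x a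
    rw [hxy]
    exact hsm y ⟨by linarith [hy.1, two_pi_pos'], hy.2⟩
  · intro x hx
    rcases hx.2.eq_or_lt with h | h
    · rw [hhi x h.ge, h, hper a, hin a ⟨le_rfl, by linarith [two_pi_pos']⟩, hlo a le_rfl]
    · exact hin x ⟨hx.1, h⟩

theorem interp {θ : ℕ → ℝ} {n : ℕ} (hk : Knots θ n) (y : ℕ → ℝ) (hy : y n = y 0)
    (P : ℕ → ℝ → ℝ) (hs : ∀ j < n, ContDiff ℝ (⊤ : ℕ∞) (P j))
    (hlo : ∀ j < n, ∀ x ≤ θ j, P j x = 0) (hhi : ∀ j < n, ∀ x, θ (j + 1) ≤ x → P j x = 1) :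
    ∃ G : ℝ → ℝ, ContDiff ℝ (⊤ : ℕ∞) G ∧ Function.Periodic G (2 * Real.pi) ∧
      (∀ j < n, ∀ x ∈ Icc (θ j) (θ (j + 1)), G x = y j + (y (j + 1) - y j) * P j x) ∧
      (∀ j ≤ n, G (θ j) = y j) ∧
      (∀ j < n, ∀ x ∈ Ioo (θ j) (θ (j + 1)), deriv G x = (y (j + 1) - y j) * deriv (P j) x) := by
  set F : ℝ → ℝ := fun x => y 0 + ∑ j ∈ Finset.range n, (y (j + 1) - y j) * P j x with hF
  have hFs : ContDiff ℝ (⊤ : ℕ∞) F := contDiff_const.add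
    (ContDiff.sum fun j hj => contDiff_const.mul (hs j (Finset.mem_range.1 hj)))
  have harc : ∀ j < n, ∀ x ∈ Icc (θ j) (θ (j + 1)), F x = y j + (y (j + 1) - y j) * P j x := by
    intro j hj x hx
    have h1 : ∑ i ∈ Finset.range n, (y (i + 1) - y i) * P i x
        = ∑ i ∈ Finset.range (j + 1), (y (i + 1) - y i) * P i x := by
      symm
      apply Finset.sum_subset (Finset.range_mono (by omega))
      intro i hi hi'
      rw [Finset.mem_range] at hi hi'
      rw [hlo i hi x (hx.2.trans (hk.le (by omega) hi.le)), mul_zero]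
    have h2 : ∑ i ∈ Finset.range j, (y (i + 1) - y i) * P i x = ∑ i ∈ Finset.range j, (y (i + 1) - y i) := by
      apply Finset.sum_congr rfl
      intro i hi
      rw [Finset.mem_range] at hi
      rw [hhi i (by omega) x ((hk.le (by omega) hj.le).trans hx.1), mul_one]
    simp only [hF]
    rw [h1, Finset.sum_range_succ, h2, Finset.sum_range_sub]; ring
  have hloF : ∀ x ≤ θ 0, F x = y 0 := by
    intro x hx
    simp only [hF]
    rw [Finset.sum_eq_zero, add_zero]
    intro i hi
    rw [Finset.mem_range] at hi
    rw [hlo i hi x (hx.trans (hk.le (by omega) hi.le)), mul_zero]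
  have hhiF : ∀ x, θ 0 + 2 * Real.pi ≤ x → F x = y 0 := by
    intro x hx
    rw [← hk.tot] at hx
    have h2 : ∑ i ∈ Finset.range n, (y (i + 1) - y i) * P i x = ∑ i ∈ Finset.range n, (y (i + 1) - y i) := by
      apply Finset.sum_congr rfl
      intro i hi
      rw [Finset.mem_range] at hi
      rw [hhi i (by omega) x ((hk.le (by omega) le_rfl).trans hx), mul_one]
    simp only [hF]
    rw [h2, Finset.sum_range_sub, hy]; ring
  obtain ⟨G, hGs, hGp, hGF⟩ := periodize hFs hloF hhiF
  rw [← hk.tot] at hGF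
  have hGarc : ∀ j < n, ∀ x ∈ Icc (θ j) (θ (j + 1)), G x = y j + (y (j + 1) - y j) * P j x := by
    intro j hj x hx
    rw [hGF x ⟨(hk.le (by omega) (by omega)).trans hx.1, hx.2.trans (hk.le (by omega) (by omega))⟩]
    exact harc j hj x hx
  refine ⟨G, hGs, hGp, hGarc, ?_, ?_⟩
  · intro j hj
    rcases hj.eq_or_lt with h | h
    · obtain ⟨k, rfl⟩ : ∃ k, n = k + 1 := ⟨n - 1, by have := hk.pos; omega⟩
      subst h
      rw [hGarc k (by omega) _ ⟨(hk.lt k (by omega)).le, le_rfl⟩, hhi k (by omega) _ le_rfl]; ring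
    · rw [hGarc j h _ ⟨le_rfl, (hk.lt j h).le⟩, hlo j h _ le_rfl]; ring
  · intro j hj x hx
    have : G =ᶠ[𝓝 x] fun x => y j + (y (j + 1) - y j) * P j x := by
      filter_upwards [isOpen_Ioo.mem_nhds hx] with z hz using hGarc j hj z (Ioo_subset_Icc_self hz)
    rw [this.deriv_eq]
    have hd := ((hs j hj).differentiable (by simp) x).hasDerivAt
    exact ((hd.const_mul _).const_add _).deriv

def Zig (g : ℝ → ℝ) (θ : ℕ → ℝ) (n : ℕ) : Prop :=
  ∀ j < n, ∀ x ∈ Ioo (θ j) (θ (j + 1)), 0 < (-1 : ℝ) ^ (j + 1) * deriv g x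

theorem zig_smono {g θ n} (hg : ContDiff ℝ (⊤ : ℕ∞) g) (h : Zig g θ n) {j : ℕ} (hj : j < n) :
    StrictMonoOn (fun x => (-1 : ℝ) ^ (j + 1) * g x) (Icc (θ j) (θ (j + 1))) := by
  apply strictMonoOn_of_deriv_pos (convex_Icc _ _)
  · exact (continuous_const.mul hg.continuous).continuousOn
  · intro x hx
    rw [interior_Icc] at hx
    have hd := (hg.differentiable (by simp) x).hasDerivAt
    rw [(hd.const_mul _).deriv]; exact h j hj x hx

def Rz (n : ℕ) (y σ : ℕ → ℝ) : Prop := ∃ ε > 0, ∀ g θ, ContDiff ℝ (⊤ : ℕ∞) g →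
  Function.Periodic g (2 * Real.pi) → Knots θ n → Zig g θ n → (∀ i ≤ n, |g (θ i) - y i| < ε) →
  ∃ w, Fl g w ∧ ∀ i ≤ n, 0 < w (θ i) * σ i

theorem rz_base (y σ : ℕ → ℝ) (h0 : σ 0 = -1) (h1 : σ 1 = 1) (h2 : σ 2 = -1) : Rz 2 y σ := by
  refine ⟨1, one_pos, fun g θ hg hp hk hz _ => ?_⟩
  have k01 : θ 0 < θ 1 := hk.lt 0 (by norm_num)
  have k12 : θ 1 < θ 2 := hk.lt 1 (by norm_num)
  have k2 := hk.tot
  have anti : StrictAntiOn g (Icc (θ 0) (θ 1)) := by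
    have := zig_smono hg hz (j := 0) (by norm_num)
    intro a ha b hb hab; have := this ha hb hab; simp at this; exact this
  have smono : StrictMonoOn g (Icc (θ 1) (θ 2)) := by
    have := zig_smono hg hz (j := 1) (by norm_num)
    intro a ha b hb hab; have := this ha hb hab; simp at this; exact this
  have g01 : g (θ 1) < g (θ 0) := anti ⟨le_rfl, k01.le⟩ ⟨k01.le, le_rfl⟩ k01
  have g20 : g (θ 2) = g (θ 0) := by rw [k2, hp]
  set A := (g (θ 0) + g (θ 1)) / 2 with hA
  obtain ⟨β, hβ, hβA⟩ : A ∈ g '' Ioo (θ 0) (θ 1) :=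
    intermediate_value_Ioo' k01.le hg.continuous.continuousOn ⟨by linarith, by linarith⟩
  obtain ⟨α, hα, hαA⟩ : A ∈ g '' Ioo (θ 1) (θ 2) :=
    intermediate_value_Ioo k12.le hg.continuous.continuousOn ⟨by linarith, by rw [g20]; linarith⟩
  set μ := (α - 2 * Real.pi + β) / 2 with hμ
  have dg := per_deriv hp
  have cd : Continuous (deriv g) := hg.continuous_deriv (by simp)
  have sper : ∀ x, Real.sin (x + 2 * Real.pi - μ) = Real.sin (x - μ) := fun x => by
    rw [← Real.sin_add_two_pi (x - μ)]; ring_nf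
  have hsep : ∀ x, deriv g x * (-Real.sin (x - μ)) ≤ 0 → g x - A ≠ 0 := by
    refine hk.ind (fun x => by rw [dg x, hp x, sper x]) ?_
    intro j hj x hx hle he
    interval_cases j
    · have : x = β := anti.injOn ⟨hx.1, hx.2.le⟩ ⟨hβ.1.le, hβ.2.le⟩ (by rw [hβA]; linarith)
      subst this
      have d := hz 0 (by norm_num) x hβ
      have s : 0 < Real.sin (x - μ) := Real.sin_pos_of_pos_of_lt_pi
        (by linarith [hα.1, hβ.2, hβ.1, hα.2, Real.pi_pos]) (by linarith [hα.1, hβ.2, hβ.1, hα.2, Real.pi_pos])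
      simp at d; nlinarith
    · have : x = α := smono.injOn ⟨hx.1, hx.2.le⟩ ⟨hα.1.le, hα.2.le⟩ (by rw [hαA]; linarith)
      subst this
      have d := hz 1 (by norm_num) x hα
      have s : 0 < Real.sin (x - μ - Real.pi) := Real.sin_pos_of_pos_of_lt_pi
        (by linarith [hα.1, hβ.2, hβ.1, hα.2, Real.pi_pos]) (by linarith [hα.1, hβ.2, hβ.1, hα.2, Real.pi_pos])
      rw [Real.sin_sub_pi] at s
      simp at d; nlinarith
  obtain ⟨c, c0, hc⟩ := per_sep (h := fun x => g x - A) (k := fun x => deriv g x * (-Real.sin (x - μ)))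
    (hg.continuous.sub continuous_const) (cd.mul (by fun_prop))
    (fun x => by simp only [hp x]) (fun x => by simp only [dg x, sper x]) hsep
  set B := min c ((g (θ 0) - g (θ 1)) / 2) / 4 with hB
  have hB0 : 0 < B := by
    have : 0 < min c ((g (θ 0) - g (θ 1)) / 2) := lt_min c0 (by linarith)
    rw [hB]; linarith
  have hBc : 4 * B ≤ c := by rw [hB]; linarith [min_le_left c ((g (θ 0) - g (θ 1)) / 2)]
  have hBg : 4 * B ≤ (g (θ 0) - g (θ 1)) / 2 := by
    rw [hB]; linarith [min_le_right c ((g (θ 0) - g (θ 1)) / 2)]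
  have gμ : A < g μ := by
    by_cases h : θ 0 ≤ μ
    · rw [← hβA]
      have : μ < β := by linarith [hα.1, hβ.2, hβ.1, hα.2]
      exact anti ⟨h, by linarith [hβ.2]⟩ (Ioo_subset_Icc_self hβ) this
    · push Not at h
      rw [← hαA, ← hp μ]
      have : α < μ + 2 * Real.pi := by linarith [hα.1, hβ.2, hβ.1, hα.2]
      exact smono (Ioo_subset_Icc_self hα) ⟨by linarith [hα.1], by linarith⟩ this
  have gν : g (μ + Real.pi) < A := by
    have b1 : β < μ + Real.pi := by linarith [hα.1, hβ.2, hβ.1, hα.2]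
    have b2 : μ + Real.pi < α := by linarith [hα.1, hβ.2, hβ.1, hα.2]
    by_cases h : μ + Real.pi ≤ θ 1
    · rw [← hβA]; exact anti (Ioo_subset_Icc_self hβ) ⟨by linarith [hβ.1], h⟩ b1
    · push Not at h
      rw [← hαA]; exact smono ⟨h.le, by linarith [hα.2]⟩ (Ioo_subset_Icc_self hα) b2
  have dG : ∀ x, deriv (fun x => A + 2 * B * Real.cos (x - μ)) x = 2 * B * (-Real.sin (x - μ)) := by
    intro x
    have := (Real.hasDerivAt_cos (x - μ)).comp_sub_const x μ
    exact ((this.const_mul _).const_add A).deriv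
  have hcos : ∀ x, |2 * B * Real.cos (x - μ)| ≤ 2 * B := fun x => by
    rw [abs_mul, abs_of_pos (by linarith : 0 < 2 * B)]
    have := Real.abs_cos_le_one (x - μ)
    nlinarith
  refine ⟨_, fl_step (fl_base A B μ hB0) hg hp ?_ ?_, ?_⟩
  · intro x hx
    rw [dG] at hx
    have hs : Real.sin (x - μ) = 0 := by
      have : (2 * B) * Real.sin (x - μ) = 0 := by linarith
      exact (mul_eq_zero.1 this).resolve_left (by linarith)
    have hcx := hc x (by rw [hs]; simp)
    rcases Real.sin_eq_zero_iff_cos_eq.1 hs with h | h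
    · obtain ⟨k, hk⟩ := (Real.cos_eq_one_iff _).1 h
      have : x = μ + k * (2 * Real.pi) := by linarith
      have gx : g x = g μ := by rw [this]; exact hp.int_mul k μ
      rw [abs_of_pos (by rw [gx]; linarith)] at hcx
      simp only [h]; nlinarith
    · obtain ⟨k, hk⟩ := Real.cos_eq_neg_one_iff.1 h
      have : x = μ + Real.pi + k * (2 * Real.pi) := by linarith
      have gx : g x = g (μ + Real.pi) := by rw [this]; exact hp.int_mul k _
      rw [abs_of_neg (by rw [gx]; linarith)] at hcx
      simp only [h]; nlinarith
  · intro x hx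
    rw [dG]
    by_contra hcon
    push Not at hcon
    have := hc x (by nlinarith)
    have h3 := hcos x
    have : g x - A = 2 * B * Real.cos (x - μ) := by linarith
    rw [← this] at h3
    linarith
  · intro i hi
    have a0 := abs_le.1 (hcos (θ 0))
    have a1 := abs_le.1 (hcos (θ 1))
    have a2 := abs_le.1 (hcos (θ 2))
    interval_cases i
    · rw [h0]; linarith
    · rw [h1]; linarith
    · rw [h2, g20]; linarith


theorem fin_gap (f : ℕ → ℝ) : ∀ N, (∀ k < N, 0 < f k) → ∃ η > 0, ∀ k < N, η < f k := by
  intro N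
  induction N with
  | zero => intro _; exact ⟨1, one_pos, by intro k hk; omega⟩
  | succ N ih =>
    intro h
    obtain ⟨η, h0, h1⟩ := ih fun k hk => h k (by omega)
    have hN := h N (by omega)
    refine ⟨min η (f N / 2), lt_min h0 (by linarith), fun k hk => ?_⟩
    rcases Nat.lt_succ_iff_lt_or_eq.1 hk with h2 | h2
    · exact (min_le_left _ _).trans_lt (h1 k h2)
    · rw [h2]; exact (min_le_right _ _).trans_lt (by linarith)

theorem prof_near_a {a b c d A D e : ℝ} {g : ℝ → ℝ} (hab : a < b) (hbc : b < c) (hcd : c < d)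
    (hg : ∀ x ∈ Icc b c, e * g c ≤ e * g x) (h1 : 0 < e * (D - A)) (h2 : e * A < e * g c) :
    ∃ P, IsProf P a d ∧ ∀ x ∈ Icc b c, 0 < (-e) * (A + (D - A) * P x - g x) := by
  obtain ⟨P, hP, hPc⟩ := exists_prof_small (hab.trans hbc) hcd
    (div_pos (by linarith : 0 < e * g c - e * A) h1)
  refine ⟨P, hP, fun x hx => ?_⟩
  rw [lt_div_iff₀ h1] at hPc
  have h3 := hP.mono hx.2
  have h4 := hg x hx
  nlinarith

theorem prof_near_d {a b c d A D e : ℝ} {g : ℝ → ℝ} (hab : a < b) (hbc : b < c) (hcd : c < d)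
    (hg : ∀ x ∈ Icc b c, e * g x ≤ e * g b) (h1 : 0 < e * (D - A)) (h2 : e * g b < e * D) :
    ∃ P, IsProf P a d ∧ ∀ x ∈ Icc b c, 0 < e * (A + (D - A) * P x - g x) := by
  obtain ⟨P, hP, hPc⟩ := exists_prof_large hab (hbc.trans hcd)
    (div_pos (by linarith : 0 < e * D - e * g b) h1)
  refine ⟨P, hP, fun x hx => ?_⟩
  rw [sub_lt_comm, lt_div_iff₀ h1] at hPc
  have h3 := hP.mono hx.1
  have h4 := hg x hx
  nlinarith

def sk (i j : ℕ) : ℕ := if j < i then j else j + 2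

theorem sk_lt {i j : ℕ} (h : j < i) : sk i j = j := by simp [sk, h]
theorem sk_ge {i j : ℕ} (h : i ≤ j) : sk i j = j + 2 := by simp [sk, not_lt.2 h]

theorem pm_abs {s : ℝ} (h : s = 1 ∨ s = -1) (x : ℝ) : |x| = |s * x| := by
  rcases h with rfl | rfl <;> simp

theorem pow_pm (j : ℕ) : (-1 : ℝ) ^ j = 1 ∨ (-1 : ℝ) ^ j = -1 := neg_one_pow_eq_or ℝ j

theorem knots_sk {θ n i} (hk : Knots θ (n + 2)) (hi : 1 ≤ i) (hin : i ≤ n) : Knots (fun j => θ (sk i j)) n := by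
  constructor
  · intro j hj
    apply hk.slt
    · unfold sk; split_ifs <;> omega
    · unfold sk; split_ifs <;> omega
  · show θ (sk i n) = θ (sk i 0) + _
    rw [sk_lt (show 0 < i by omega), sk_ge hin, hk.tot]

set_option maxHeartbeats 1000000 in
theorem rz_step {n i : ℕ} {y σ : ℕ → ℝ} (hi : 1 ≤ i) (hin : i ≤ n)
    (hy : ∀ j < n + 2, 0 < (-1 : ℝ) ^ (j + 1) * (y (j + 1) - y j))
    (hσ : ∀ j, σ j = 1 ∨ σ j = -1) (hσp : σ 0 = σ (n + 2)) (hσi : σ i = σ (i + 1))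
    (hcase : (0 < (-1 : ℝ) ^ i * (y (i + 1) - y (i - 1)) ∧ σ i = -(-1 : ℝ) ^ i) ∨
      (0 < (-1 : ℝ) ^ i * (y (i + 2) - y i) ∧ σ i = (-1 : ℝ) ^ i))
    (IH : Rz n (fun j => y (sk i j)) (fun j => σ (sk i j))) : Rz (n + 2) y σ := by
  obtain ⟨ε0, hε0, IH⟩ := IH
  obtain ⟨k, rfl⟩ : ∃ k, i = k + 1 := ⟨i - 1, by omega⟩
  simp only [Nat.add_sub_cancel] at hcase
  set e : ℝ := (-1 : ℝ) ^ (k + 1) with he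
  obtain ⟨η, hη0, hηε, hηg, hηc⟩ : ∃ η > 0, 2 * η < ε0 ∧
      (∀ j < n + 2, 4 * η < (-1 : ℝ) ^ (j + 1) * (y (j + 1) - y j)) ∧
      ((4 * η < e * (y (k + 1 + 1) - y k) ∧ σ (k + 1) = -e) ∨
      (4 * η < e * (y (k + 1 + 2) - y (k + 1)) ∧ σ (k + 1) = e)) := by
    obtain ⟨η1, h1, h2⟩ := fin_gap _ _ hy
    rcases hcase with ⟨h3, h4⟩ | ⟨h3, h4⟩
    · refine ⟨min (ε0 / 4) (min (η1 / 4) (e * (y (k + 1 + 1) - y k) / 8)), ?_, ?_, ?_, Or.inl ⟨?_, h4⟩⟩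
      · exact lt_min (by linarith) (lt_min (by linarith) (by linarith))
      · linarith [min_le_left (ε0 / 4) (min (η1 / 4) (e * (y (k + 1 + 1) - y k) / 8))]
      · intro j hj
        have := h2 j hj
        linarith [min_le_right (ε0 / 4) (min (η1 / 4) (e * (y (k + 1 + 1) - y k) / 8)),
          min_le_left (η1 / 4) (e * (y (k + 1 + 1) - y k) / 8)]
      · linarith [min_le_right (ε0 / 4) (min (η1 / 4) (e * (y (k + 1 + 1) - y k) / 8)),
          min_le_right (η1 / 4) (e * (y (k + 1 + 1) - y k) / 8)]
    · refine ⟨min (ε0 / 4) (min (η1 / 4) (e * (y (k + 1 + 2) - y (k + 1)) / 8)), ?_, ?_, ?_, Or.inr ⟨?_, h4⟩⟩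
      · exact lt_min (by linarith) (lt_min (by linarith) (by linarith))
      · linarith [min_le_left (ε0 / 4) (min (η1 / 4) (e * (y (k + 1 + 2) - y (k + 1)) / 8))]
      · intro j hj
        have := h2 j hj
        linarith [min_le_right (ε0 / 4) (min (η1 / 4) (e * (y (k + 1 + 2) - y (k + 1)) / 8)),
          min_le_left (η1 / 4) (e * (y (k + 1 + 2) - y (k + 1)) / 8)]
      · linarith [min_le_right (ε0 / 4) (min (η1 / 4) (e * (y (k + 1 + 2) - y (k + 1)) / 8)),
          min_le_right (η1 / 4) (e * (y (k + 1 + 2) - y (k + 1)) / 8)]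
  refine ⟨η, hη0, fun g θ hg hp hk hz hcl => ?_⟩
  set θ' : ℕ → ℝ := fun j => θ (sk (k + 1) j) with hθ'
  have hk' : Knots θ' n := knots_sk hk hi hin
  set y' : ℕ → ℝ := fun j => g (θ' j) + η * σ (sk (k + 1) j) with hy'
  have ee : e = 1 ∨ e = -1 := pow_pm _
  have eσ : ∀ (s : ℝ), (s = 1 ∨ s = -1) → ∀ j, |s * σ j| ≤ 1 := by
    intro s hs j
    rw [← pm_abs hs]
    rcases hσ j with h | h <;> simp [h]
  have eη : ∀ (s : ℝ), (s = 1 ∨ s = -1) → ∀ j, -η ≤ s * (η * σ j) ∧ s * (η * σ j) ≤ η := by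
    intro s hs j
    have := abs_le.1 (eσ s hs j)
    constructor <;> nlinarith
  have ecl : ∀ (s : ℝ), (s = 1 ∨ s = -1) → ∀ j ≤ n + 2, |s * g (θ j) - s * y j| < η := by
    intro s hs j hj
    rw [← mul_sub, ← pm_abs hs]; exact hcl j hj
  have hσ2 : ∀ j, 0 < σ j * σ j := fun j => by rcases hσ j with h | h <;> simp [h]
  have hyper : y' n = y' 0 := by
    simp only [hy', hθ']
    rw [sk_lt (show 0 < k + 1 by omega), sk_ge hin, hk.tot, hp, hσp]
  -- knots of the special arc
  have ta : θ' k = θ k := by simp only [hθ']; rw [sk_lt (by omega)]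
  have td : θ' (k + 1) = θ (k + 3) := by simp only [hθ']; rw [sk_ge (by omega)]
  have hab : θ k < θ (k + 1) := hk.lt k (by omega)
  have hbc : θ (k + 1) < θ (k + 2) := hk.lt (k + 1) (by omega)
  have hcd : θ (k + 2) < θ (k + 3) := hk.lt (k + 2) (by omega)
  have hmono : ∀ x ∈ Icc (θ (k + 1)) (θ (k + 2)), ∀ z ∈ Icc (θ (k + 1)) (θ (k + 2)), x ≤ z →
      e * g z ≤ e * g x := by
    intro x hx z hz' hxz
    have := (zig_smono hg hz (j := k + 1) (by omega)).monotoneOn hx hz' hxz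
    simp only [pow_succ] at this
    simp only [he, pow_succ]
    linarith
  have gapg : ∀ j < n + 2, ∀ u v : ℝ, |u| ≤ 1 → |v| ≤ 1 →
      0 < (-1 : ℝ) ^ (j + 1) * (g (θ (j + 1)) - g (θ j)) + η * u + η * v := by
    intro j hj u v hu hv
    have h1 := abs_lt.1 (ecl _ (pow_pm (j + 1)) j (by omega))
    have h2 := abs_lt.1 (ecl _ (pow_pm (j + 1)) (j + 1) (by omega))
    have h3 := hηg j hj
    have := abs_le.1 hu; have := abs_le.1 hv
    nlinarith
  have hpow : ∀ j : ℕ, (-1 : ℝ) ^ (j + 2) = (-1) ^ j := fun j => by rw [pow_add]; norm_num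
  have aσ : ∀ j, |σ j| ≤ 1 := fun j => by simpa using eσ 1 (Or.inl rfl) j
  have gapda : 0 < e * (y' (k + 1) - y' k) := by
    have q1 := gapg k (by omega) 0 0 (by simp) (by simp)
    have q3 := gapg (k + 2) (by omega) 0 0 (by simp) (by simp)
    have r1 := abs_lt.1 (ecl e ee k (by omega))
    have r2 := abs_lt.1 (ecl e ee (k + 1) (by omega))
    have r3 := abs_lt.1 (ecl e ee (k + 2) (by omega))
    have r4 := abs_lt.1 (ecl e ee (k + 3) (by omega))
    have s1 := eη e ee k
    have s2 := eη e ee (k + 3)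
    have g1 := hηg k (by omega)
    have g3 := hηg (k + 2) (by omega)
    rw [show k + 2 + 1 = k + 1 + 2 from rfl, hpow] at g3
    simp only [← he] at g1 g3
    have e1 : y' (k + 1) = g (θ (k + 3)) + η * σ (k + 3) := by
      simp only [hy', td]; rw [sk_ge (by omega)]
    have e2 : y' k = g (θ k) + η * σ k := by
      simp only [hy', ta]; rw [sk_lt (by omega)]
    rw [e1, e2]
    have t3 : y (k + 1 + 2) = y (k + 3) := rfl
    rw [t3] at g3
    rcases hηc with ⟨h, _⟩ | ⟨h, _⟩
    · rw [show k + 1 + 1 = k + 2 from rfl] at h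
      linarith
    · rw [t3] at h
      linarith
  have special : ∃ P, IsProf P (θ k) (θ (k + 3)) ∧ ∀ x ∈ Icc (θ (k + 1)) (θ (k + 2)),
      0 < σ (k + 1) * (y' k + (y' (k + 1) - y' k) * P x - g x) := by
    have r1 := abs_lt.1 (ecl e ee k (by omega))
    have r2 := abs_lt.1 (ecl e ee (k + 1) (by omega))
    have r3 := abs_lt.1 (ecl e ee (k + 2) (by omega))
    have r4 := abs_lt.1 (ecl e ee (k + 3) (by omega))
    have s1 := eη e ee k
    have s2 := eη e ee (k + 3)
    have e1 : y' (k + 1) = g (θ (k + 3)) + η * σ (k + 3) := by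
      simp only [hy', td]; rw [sk_ge (by omega)]
    have e2 : y' k = g (θ k) + η * σ k := by
      simp only [hy', ta]; rw [sk_lt (by omega)]
    rcases hηc with ⟨h, hs⟩ | ⟨h, hs⟩
    · rw [hs]
      refine prof_near_a hab hbc hcd (fun x hx => hmono x hx _ ⟨hbc.le, le_rfl⟩ hx.2) gapda ?_
      rw [show k + 1 + 1 = k + 2 from rfl] at h
      rw [e2]; linarith
    · rw [hs]
      refine prof_near_d hab hbc hcd (fun x hx => hmono _ ⟨le_rfl, hbc.le⟩ x hx hx.1) gapda ?_
      rw [show k + 1 + 2 = k + 3 from rfl] at h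
      rw [e1]; linarith
  obtain ⟨Ps, hPs, hPs'⟩ := special
  have hex : ∀ j, ∃ P, j < n → (IsProf P (θ' j) (θ' (j + 1)) ∧ (j = k → P = Ps)) := by
    intro j
    by_cases hjk : j = k
    · exact ⟨Ps, fun _ => ⟨by rw [hjk, ta, td]; exact hPs, fun _ => rfl⟩⟩
    · by_cases hj : j < n
      · obtain ⟨P, hP⟩ := exists_prof (hk'.lt j hj)
        exact ⟨P, fun _ => ⟨hP, fun h => absurd h hjk⟩⟩
      · exact ⟨Ps, fun h => absurd h hj⟩
  choose P hP using hex
  obtain ⟨G, hGs, hGp, hGf, hGk, hGd⟩ := interp hk' y' hyper P (fun j hj => (hP j hj).1.sm)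
    (fun j hj => (hP j hj).1.lo) (fun j hj => (hP j hj).1.hi)
  have hgap' : ∀ j < n, 0 < (-1 : ℝ) ^ (j + 1) * (y' (j + 1) - y' j) := by
    intro j hj
    rcases lt_trichotomy j k with h | h | h
    · have := gapg j (by omega) _ _ (eσ ((-1) ^ (j + 1)) (pow_pm _) (j + 1))
        (by rw [abs_neg]; exact (eσ ((-1) ^ (j + 1)) (pow_pm _) j))
      simp only [hy', hθ']
      rw [sk_lt (by omega), sk_lt (by omega)]
      linarith
    · rw [h]; exact gapda
    · have := gapg (j + 2) (by omega) _ _ (eσ ((-1) ^ (j + 1)) (pow_pm _) (j + 2 + 1))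
        (by rw [abs_neg]; exact (eσ ((-1) ^ (j + 1)) (pow_pm _) (j + 2)))
      rw [show j + 2 + 1 = j + 1 + 2 from rfl, hpow] at this
      simp only [hy', hθ']
      rw [sk_ge (by omega), sk_ge (by omega)]
      linarith
  have hZ : Zig G θ' n := by
    intro j hj x hx
    rw [hGd j hj x hx, ← mul_assoc]
    exact mul_pos (hgap' j hj) ((hP j hj).1.pos x hx)
  have hskle : ∀ j ≤ n, sk (k + 1) j ≤ n + 2 := fun j hj => by unfold sk; split_ifs <;> omega
  obtain ⟨w, hw, hwσ⟩ := IH G θ' hGs hGp hk' hZ (by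
    intro j hj
    rw [hGk j hj]
    simp only [hy', hθ']
    have h1 := abs_lt.1 (hcl _ (hskle j hj))
    have h2 := abs_le.1 (aσ (sk (k + 1) j))
    rw [abs_lt]; constructor <;> nlinarith)
  have dGp := per_deriv hGp
  have dgp := per_deriv hp
  have knotdiff : ∀ j ≤ n, G (θ' j) - g (θ' j) = η * σ (sk (k + 1) j) := by
    intro j hj; rw [hGk j hj]; simp only [hy']; ring
  have spec' : ∀ x ∈ Icc (θ (k + 1)) (θ (k + 2)), 0 < σ (k + 1) * (G x - g x) := by
    intro x hx
    rw [hGf k (by omega) x (by rw [ta, td]; exact ⟨by linarith [hx.1], by linarith [hx.2]⟩),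
      (hP k (by omega)).2 rfl]
    exact hPs' x hx
  refine ⟨_, fl_step hw hg hp ?_ ?_, ?_⟩
  · refine hk'.ind (fun x => by rw [dGp x, hGp x, hp x, hw.per_w x]) ?_
    intro j hj x hx hd
    rcases hx.1.eq_or_lt with h | h
    · rw [← h, knotdiff j hj.le]
      have := hwσ j hj.le
      simp only at this
      nlinarith
    · have := hZ j hj x ⟨h, hx.2⟩
      rw [hd] at this; simp at this
  · refine hk'.ind (fun x => by rw [dGp x, hGp x, hp x, dgp x]) ?_
    intro j hj x hx hd
    rcases hx.1.eq_or_lt with h | h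
    · have h1 := knotdiff j hj.le
      rw [h, hd] at h1
      have h2 := hσ2 (sk (k + 1) j)
      have h3 : η * σ (sk (k + 1) j) = 0 := by linarith
      rcases mul_eq_zero.1 h3 with h4 | h4
      · linarith
      · rw [h4] at h2; simp at h2
    · have hG' := hZ j hj x ⟨h, hx.2⟩
      have hg' : 0 < (-1 : ℝ) ^ (j + 1) * deriv g x := by
        rcases lt_trichotomy j k with h' | h' | h'
        · apply hz j (by omega) x
          simp only [hθ'] at h hx
          rw [sk_lt (by omega)] at h
          rw [sk_lt (show j + 1 < k + 1 by omega)] at hx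
          exact ⟨h, hx.2⟩
        · subst h'
          rw [ta] at h
          rw [td] at hx
          by_cases hb : x < θ (j + 1)
          · exact hz j (by omega) x ⟨h, hb⟩
          · by_cases hc : x ≤ θ (j + 2)
            · have := spec' x ⟨not_lt.1 hb, hc⟩
              rw [hd] at this; simp at this
            · have := hz (j + 2) (by omega) x ⟨not_le.1 hc, hx.2⟩
              rwa [show j + 2 + 1 = j + 1 + 2 from rfl, hpow] at this
        · have : 0 < (-1 : ℝ) ^ (j + 2 + 1) * deriv g x := by
            apply hz (j + 2) (by omega) x
            simp only [hθ'] at h hx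
            rw [sk_ge (by omega)] at h
            rw [sk_ge (show k + 1 ≤ j + 1 by omega)] at hx
            exact ⟨h, hx.2⟩
          rwa [show j + 2 + 1 = j + 1 + 2 from rfl, hpow] at this
      rcases pow_pm (j + 1) with h5 | h5 <;> rw [h5] at hG' hg' <;> nlinarith
  · intro m hm
    have key : ∀ j ≤ n, sk (k + 1) j = m → 0 < (G (θ m) - g (θ m)) * σ m := by
      intro j hj hjm
      have h1 := knotdiff j hj
      simp only [hθ', hjm] at h1
      rw [h1]
      have := hσ2 m
      nlinarith
    by_cases h1 : m < k + 1
    · exact key m (by omega) (sk_lt h1)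
    · by_cases h2 : m = k + 1
      · have := spec' (θ (k + 1)) ⟨le_rfl, hbc.le⟩
        rw [h2]; linarith
      · by_cases h3 : m = k + 2
        · have := spec' (θ (k + 2)) ⟨hbc.le, le_rfl⟩
          rw [hσi] at this
          rw [h3]; linarith
        · exact key (m - 2) (by omega) (by rw [sk_ge (by omega)]; omega)


theorem good_sub {h : ℝ → ℝ} (hh : ContDiff ℝ (⊤ : ℕ∞) h) {a b : ℝ} (hab : a < b) (hlt : h a < h b) :
    ∃ u v δ, a < u ∧ u < v ∧ v < b ∧ 0 < δ ∧ ∀ x ∈ Icc u v, δ ≤ deriv h x := by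
  obtain ⟨c, hc, hcd⟩ := exists_deriv_eq_slope h hab hh.continuous.continuousOn
    (hh.differentiable (by simp)).differentiableOn
  have hpos : 0 < deriv h c := by rw [hcd]; exact div_pos (by linarith) (by linarith)
  have cd : Continuous (deriv h) := hh.continuous_deriv (by simp)
  have ho : IsOpen ({x | deriv h c / 2 < deriv h x} ∩ Ioo a b) :=
    (isOpen_lt continuous_const cd).inter isOpen_Ioo
  obtain ⟨r, hr, hrs⟩ := Metric.isOpen_iff.1 ho c ⟨by show deriv h c / 2 < deriv h c; linarith, hc⟩
  have hin : ∀ x ∈ Icc (c - r / 2) (c + r / 2), x ∈ {x | deriv h c / 2 < deriv h x} ∩ Ioo a b := by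
    intro x hx
    apply hrs
    rw [Metric.mem_ball, Real.dist_eq, abs_lt]
    constructor <;> linarith [hx.1, hx.2]
  refine ⟨c - r / 2, c + r / 2, deriv h c / 2, ?_, by linarith, ?_, by linarith, ?_⟩
  · exact (hin _ ⟨le_rfl, by linarith⟩).2.1
  · exact (hin _ ⟨by linarith, le_rfl⟩).2.2
  · intro x hx; exact (hin x hx).1.le

theorem prof_deriv_zero {P u v} (h : IsProf P u v) {x : ℝ} (hx : x ∉ Icc u v) : deriv P x = 0 := by
  have : x < u ∨ v < x := by
    by_contra hc; push Not at hc; exact hx ⟨hc.1, hc.2⟩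
  rcases this with hx | hx
  · have : P =ᶠ[𝓝 x] fun _ => 0 := by
      filter_upwards [isOpen_Iio.mem_nhds hx] with z hz using h.lo z (le_of_lt hz)
    rw [this.deriv_eq]; simp
  · have : P =ᶠ[𝓝 x] fun _ => 1 := by
      filter_upwards [isOpen_Ioi.mem_nhds hx] with z hz using h.hi z (le_of_lt hz)
    rw [this.deriv_eq]; simp

set_option maxHeartbeats 1000000 in
theorem rz_init {g : ℝ → ℝ} {θ : ℕ → ℝ} {n : ℕ} {σ : ℕ → ℝ} (hg : ContDiff ℝ (⊤ : ℕ∞) g)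
    (hp : Function.Periodic g (2 * Real.pi)) (hk : Knots θ n)
    (hm : ∀ j < n, StrictMonoOn (fun x => (-1 : ℝ) ^ (j + 1) * g x) (Icc (θ j) (θ (j + 1))))
    (hσ : ∀ j, σ j = 1 ∨ σ j = -1) (hσp : σ 0 = σ n)
    (IH : Rz n (fun j => g (θ j)) σ) : ∃ w, Fl g w := by
  obtain ⟨ε, hε, IH⟩ := IH
  have hdiff : Differentiable ℝ g := hg.differentiable (by simp)
  have dsg : ∀ (s : ℝ) x, deriv (fun x => s * g x) x = s * deriv g x := fun s x =>
    ((hdiff x).hasDerivAt.const_mul s).deriv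
  have hnn : ∀ j < n, ∀ x ∈ Ioo (θ j) (θ (j + 1)), 0 ≤ (-1 : ℝ) ^ (j + 1) * deriv g x := by
    intro j hj x hx
    rw [← dsg]
    have := ((hm j hj).monotoneOn).derivWithin_nonneg (x := x)
    rwa [derivWithin_of_mem_nhds (Icc_mem_nhds hx.1 hx.2)] at this
  have hgap : ∀ j < n, 0 < (-1 : ℝ) ^ (j + 1) * (g (θ (j + 1)) - g (θ j)) := by
    intro j hj
    have := hm j hj ⟨le_rfl, (hk.lt j hj).le⟩ ⟨(hk.lt j hj).le, le_rfl⟩ (hk.lt j hj)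
    simp only at this
    linarith
  have hex : ∀ j, ∃ u v δ, j < n → (θ j < u ∧ u < v ∧ v < θ (j + 1) ∧ 0 < δ ∧
      ∀ x ∈ Icc u v, δ ≤ (-1 : ℝ) ^ (j + 1) * deriv g x) := by
    intro j
    by_cases hj : j < n
    · obtain ⟨u, v, δ, h⟩ := good_sub (h := fun x => (-1 : ℝ) ^ (j + 1) * g x)
        (contDiff_const.mul hg) (hk.lt j hj) (by have := hgap j hj; linarith)
      simp only [dsg] at h
      exact ⟨u, v, δ, fun _ => h⟩
    · exact ⟨0, 0, 0, fun h => absurd h hj⟩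
  choose u v δ huv using hex
  have hexP : ∀ j, ∃ P, j < n → IsProf P (θ j) (θ (j + 1)) := by
    intro j
    by_cases hj : j < n
    · obtain ⟨P, hP⟩ := exists_prof (hk.lt j hj); exact ⟨P, fun _ => hP⟩
    · exact ⟨fun _ => 0, fun h => absurd h hj⟩
  choose P hP using hexP
  have hexQ : ∀ j, ∃ P, j < n → IsProf P (u j) (v j) := by
    intro j
    by_cases hj : j < n
    · obtain ⟨P, hP⟩ := exists_prof (huv j hj).2.1; exact ⟨P, fun _ => hP⟩
    · exact ⟨fun _ => 0, fun h => absurd h hj⟩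
  choose Q hQ using hexQ
  obtain ⟨Y, hYs, hYp, hYf, hYk, hYd⟩ := interp hk (fun j => g (θ j)) (by simp only [hk.tot, hp (θ 0)]) P
    (fun j hj => (hP j hj).sm) (fun j hj => (hP j hj).lo) (fun j hj => (hP j hj).hi)
  obtain ⟨W, hWs, hWp, hWf, hWk, hWd⟩ := interp hk σ hσp.symm Q
    (fun j hj => (hQ j hj).sm) (fun j hj x hx => (hQ j hj).lo x (hx.trans (huv j hj).1.le))
    (fun j hj x hx => (hQ j hj).hi x ((huv j hj).2.2.1.le.trans hx))
  obtain ⟨δ0, hδ0, hδ⟩ := fin_gap δ n (fun j hj => (huv j hj).2.2.2.1)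
  have cdW : Continuous (deriv W) := hWs.continuous_deriv (by simp)
  obtain ⟨C, hC0, hC⟩ := per_bound cdW (per_deriv hWp)
  obtain ⟨D, hD0, hD⟩ := per_bound (hYs.continuous.sub hg.continuous)
    (fun x => by simp only [Pi.sub_apply, hYp x, hp x])
  obtain ⟨κ, hκ0, hκε, hκC⟩ : ∃ κ > 0, κ < ε ∧ κ * C < δ0 / 2 := by
    refine ⟨min (ε / 2) (δ0 / (4 * C)), lt_min (by linarith) (by positivity), ?_, ?_⟩
    · exact (min_le_left _ _).trans_lt (by linarith)
    · have h1 : min (ε / 2) (δ0 / (4 * C)) * C ≤ δ0 / (4 * C) * C := by gcongr; exact min_le_right _ _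
      have h2 : δ0 / (4 * C) * C = δ0 / 4 := by field_simp
      linarith
  obtain ⟨η, hη0, hη1, hηD⟩ : ∃ η > 0, η ≤ 1 / 2 ∧ η * D < κ := by
    refine ⟨min (1 / 2) (κ / (2 * D)), lt_min (by linarith) (by positivity), min_le_left _ _, ?_⟩
    have h1 : min (1 / 2) (κ / (2 * D)) * D ≤ κ / (2 * D) * D := by gcongr; exact min_le_right _ _
    have h2 : κ / (2 * D) * D = κ / 2 := by field_simp
    linarith
  set G : ℝ → ℝ := fun x => (1 - η) * g x + η * Y x + κ * W x with hG
  have hGs : ContDiff ℝ (⊤ : ℕ∞) G :=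
    ((contDiff_const.mul hg).add (contDiff_const.mul hYs)).add (contDiff_const.mul hWs)
  have hGp : Function.Periodic G (2 * Real.pi) := fun x => by simp only [hG, hp x, hYp x, hWp x]
  have dG : ∀ x, deriv G x = (1 - η) * deriv g x + η * deriv Y x + κ * deriv W x := fun x =>
    ((((hdiff x).hasDerivAt.const_mul _).add
      (((hYs.differentiable (by simp)) x).hasDerivAt.const_mul _)).add
      (((hWs.differentiable (by simp)) x).hasDerivAt.const_mul _)).deriv
  have hZ : Zig G θ n := by
    intro j hj x hx
    rw [dG]
    have h1 := hnn j hj x hx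
    have h2 : 0 < (-1 : ℝ) ^ (j + 1) * deriv Y x := by
      rw [hYd j hj x hx, ← mul_assoc]
      exact mul_pos (hgap j hj) ((hP j hj).pos x hx)
    have h3 := mul_pos hη0 h2
    by_cases hxuv : x ∈ Icc (u j) (v j)
    · have h4 := (huv j hj).2.2.2.2 x hxuv
      have h5 := hδ j hj
      have h6 := hC x
      rw [pm_abs (pow_pm (j + 1))] at h6
      have h7 := (abs_le.1 h6).1
      nlinarith
    · have : deriv W x = 0 := by rw [hWd j hj x hx, prof_deriv_zero (hQ j hj) hxuv, mul_zero]
      rw [this]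
      nlinarith
  have hknot : ∀ j ≤ n, G (θ j) - g (θ j) = κ * σ j := by
    intro j hj; simp only [hG, hYk j hj, hWk j hj]; ring
  obtain ⟨w, hw, hwσ⟩ := IH G θ hGs hGp hk hZ (by
    intro j hj
    rw [hknot j hj, abs_mul, abs_of_pos hκ0]
    rcases hσ j with h | h <;> simp [h, hκε])
  have dGp := per_deriv hGp
  have dgp := per_deriv hp
  refine ⟨_, fl_step hw hg hp ?_ ?_⟩
  · refine hk.ind (fun x => by rw [dGp x, hGp x, hp x, hw.per_w x]) ?_
    intro j hj x hx hd
    rcases hx.1.eq_or_lt with h | h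
    · rw [← h, hknot j hj.le]
      have := hwσ j hj.le
      nlinarith
    · have := hZ j hj x ⟨h, hx.2⟩
      rw [hd] at this; simp at this
  · refine hk.ind (fun x => by rw [dGp x, hGp x, hp x, dgp x]) ?_
    intro j hj x hx hd
    by_cases hxuv : x ∈ Icc (u j) (v j)
    · have h1 : θ j < x := (huv j hj).1.trans_le hxuv.1
      have h2 := hZ j hj x ⟨h1, hx.2⟩
      have h3 := (huv j hj).2.2.2.2 x hxuv
      have h4 := (huv j hj).2.2.2.1
      rcases pow_pm (j + 1) with h5 | h5 <;> rw [h5] at h2 h3 <;> nlinarith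
    · exfalso
      have hWx : W x = 1 ∨ W x = -1 := by
        rw [hWf j hj x ⟨hx.1, hx.2.le⟩]
        by_cases hu : x ≤ u j
        · rw [(hQ j hj).lo x hu]; simpa using hσ j
        · have : v j ≤ x := by
            by_contra hv; exact hxuv ⟨(not_le.1 hu).le, (not_le.1 hv).le⟩
          rw [(hQ j hj).hi x this]; simpa using hσ (j + 1)
      have h1 : η * (Y x - g x) + κ * W x = 0 := by
        have : G x = g x := hd.symm
        simp only [hG] at this; linarith
      have h2 := abs_le.1 (hD x)
      simp only [Pi.sub_apply] at h2
      rcases hWx with h | h <;> rw [h] at h1 <;> nlinarith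


structure CH (n : ℕ) (y : ℕ → ℝ) (m M : ℝ) : Prop where
  zz : ∀ j < n, 0 < (-1 : ℝ) ^ (j + 1) * (y (j + 1) - y j)
  lo : ∀ j ≤ n, m ≤ y j
  hi : ∀ j ≤ n, y j ≤ M
  y0 : y 0 = M
  yn : y n = M
  att : ∃ j < n, y j = m

open Classical in
def AbsS (n : ℕ) (y : ℕ → ℝ) (m M : ℝ) : Finset ℕ :=
  (Finset.range n).filter fun j => y j = M ∨ y j = m

theorem mem_AbsS {n y m M j} : j ∈ AbsS n y m M ↔ j < n ∧ (y j = M ∨ y j = m) := by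
  simp [AbsS]

def Mv (y : ℕ → ℝ) (i : ℕ) : Prop :=
  0 < (-1 : ℝ) ^ i * (y (i + 1) - y (i - 1)) ∨ 0 < (-1 : ℝ) ^ i * (y (i + 2) - y i)

theorem CH.sk {n y m M} (h : CH (n + 2) y m M) {i : ℕ} (hi : 1 ≤ i) (hin : i ≤ n) (hc : Mv y i)
    (hatt : ∃ j < n + 2, j ≠ i ∧ j ≠ i + 1 ∧ y j = m) : CH n (fun j => y (sk i j)) m M := by
  have hpow : ∀ j : ℕ, (-1 : ℝ) ^ (j + 2) = (-1) ^ j := fun j => by rw [pow_add]; norm_num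
  refine ⟨?_, ?_, ?_, ?_, ?_, ?_⟩
  · intro j hj
    rcases lt_trichotomy (j + 1) i with h1 | h1 | h1
    · rw [sk_lt h1, sk_lt (by omega)]; exact h.zz j (by omega)
    · rw [sk_ge h1.ge, sk_lt (by omega)]
      subst h1
      have z1 := h.zz j (by omega)
      have z2 := h.zz (j + 1) (by omega)
      have z3 := h.zz (j + 2) (by omega)
      rw [show j + 2 + 1 = j + 1 + 2 from rfl, hpow] at z3
      rcases hc with hc | hc
      · simp only [Nat.add_sub_cancel] at hc
        rw [show j + 1 + 1 = j + 2 from rfl] at hc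
        linarith
      · linarith
    · rw [sk_ge h1.le, sk_ge (by omega)]
      have := h.zz (j + 2) (by omega)
      rwa [show j + 2 + 1 = j + 1 + 2 from rfl, hpow] at this
  · intro j hj; apply h.lo; unfold _root_.sk; split_ifs <;> omega
  · intro j hj; apply h.hi; unfold _root_.sk; split_ifs <;> omega
  · rw [sk_lt (by omega)]; exact h.y0
  · rw [sk_ge hin]; exact h.yn
  · obtain ⟨j, h1, h2, h3, h4⟩ := hatt
    by_cases hj : j < i
    · exact ⟨j, by omega, by rw [sk_lt hj]; exact h4⟩
    · refine ⟨j - 2, by omega, ?_⟩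
      rw [sk_ge (by omega), show j - 2 + 2 = j by omega]; exact h4

theorem AbsS_sk {n y m M} {i : ℕ} (hin : i ≤ n) :
    (AbsS n (fun j => y (sk i j)) m M).card ≤ (AbsS (n + 2) y m M \ {i, i + 1}).card := by
  apply Finset.card_le_card_of_injOn (sk i)
  · intro j hj
    rw [Finset.mem_coe, mem_AbsS] at hj
    rw [Finset.mem_coe, Finset.mem_sdiff, mem_AbsS]
    refine ⟨⟨?_, hj.2⟩, ?_⟩
    · unfold sk; split_ifs <;> omega
    · simp only [Finset.mem_insert, Finset.mem_singleton]
      unfold sk; split_ifs <;> omega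
  · intro a _ b _ hab
    unfold sk at hab; split_ifs at hab <;> omega

theorem comb_red {n y m M} (h : CH (n + 2) y m M) {i : ℕ} (hi : 1 ≤ i) (hin : i ≤ n) (hc : Mv y i)
    (IH : ∃ σ : ℕ → ℝ, (∀ j, σ j = 1 ∨ σ j = -1) ∧ σ 0 = -1 ∧ σ n = -1 ∧ Rz n (fun j => y (sk i j)) σ) :
    ∃ σ : ℕ → ℝ, (∀ j, σ j = 1 ∨ σ j = -1) ∧ σ 0 = -1 ∧ σ (n + 2) = -1 ∧ Rz (n + 2) y σ := by
  obtain ⟨σ', h1, h2, h3, h4⟩ := IH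
  obtain ⟨τ, hτ, hcase⟩ : ∃ τ : ℝ, (τ = 1 ∨ τ = -1) ∧
      ((0 < (-1 : ℝ) ^ i * (y (i + 1) - y (i - 1)) ∧ τ = -(-1 : ℝ) ^ i) ∨
      (0 < (-1 : ℝ) ^ i * (y (i + 2) - y i) ∧ τ = (-1 : ℝ) ^ i)) := by
    rcases hc with hc | hc
    · refine ⟨-(-1 : ℝ) ^ i, ?_, Or.inl ⟨hc, rfl⟩⟩
      rcases pow_pm i with h | h <;> simp [h]
    · exact ⟨(-1 : ℝ) ^ i, pow_pm i, Or.inr ⟨hc, rfl⟩⟩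
  set σ : ℕ → ℝ := fun j => if j < i then σ' j else if j < i + 2 then τ else σ' (j - 2) with hσ
  have s1 : ∀ j, j < i → σ j = σ' j := fun j hj => by simp [hσ, hj]
  have s2 : ∀ j, i ≤ j → j < i + 2 → σ j = τ := fun j hj hj' => by simp [hσ, not_lt.2 hj, hj']
  have s3 : ∀ j, i + 2 ≤ j → σ j = σ' (j - 2) := fun j hj => by
    simp [hσ, not_lt.2 hj, not_lt.2 (show i ≤ j by omega)]
  have sa : ∀ j, σ j = 1 ∨ σ j = -1 := by
    intro j; simp only [hσ]; split_ifs
    · exact h1 _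
    · exact hτ
    · exact h1 _
  have e0 : σ 0 = -1 := by rw [s1 0 (by omega), h2]
  have en : σ (n + 2) = -1 := by rw [s3 _ (by omega)]; exact h3
  refine ⟨σ, sa, e0, en, rz_step hi hin h.zz sa (by rw [e0, en]) ?_ ?_ ?_⟩
  · rw [s2 i le_rfl (by omega), s2 (i + 1) (by omega) (by omega)]
  · rw [s2 i le_rfl (by omega)]; exact hcase
  · have : (fun j => σ (sk i j)) = σ' := by
      funext j
      by_cases hj : j < i
      · rw [sk_lt hj, s1 j hj]
      · rw [sk_ge (by omega), s3 _ (by omega)]; rfl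
    rw [this]; exact h4

theorem CH.even_gt {n y m M} (h : CH n y m M) (hn : 0 < n) {j : ℕ} (hj : j ≤ n) (he : Even j) : m < y j := by
  rcases hj.eq_or_lt with h1 | h1
  · rw [h1, h.yn, ← h.y0]
    have := h.zz 0 hn
    have := h.lo 1 hn
    simp at *; linarith
  · have h2 := h.zz j h1
    rw [pow_succ, he.neg_one_pow] at h2
    have := h.lo (j + 1) (by omega)
    linarith

theorem CH.odd_lt {n y m M} (h : CH n y m M) {j : ℕ} (hj : j < n) (he : Odd j) : y j < M := by
  have h2 := h.zz j hj
  rw [pow_succ, he.neg_one_pow] at h2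
  have := h.hi (j + 1) (by omega)
  linarith

/-- existence of a good removal -/
theorem comb_find {K y m M} (h : CH (2 * K + 4) y m M) (hs : 2 * (AbsS (2 * K + 4) y m M).card ≤ 2 * K + 6) :
    ∃ i, 1 ≤ i ∧ i ≤ 2 * K + 2 ∧ Mv y i ∧ (∃ j < 2 * K + 4, j ≠ i ∧ j ≠ i + 1 ∧ y j = m) ∧
      2 * (AbsS (2 * K + 4) y m M \ {i, i + 1}).card ≤ 2 * K + 4 := by
  have heo : ∀ j < 2 * K + 4, y j = m → Odd j := by
    intro j hj hm
    rw [← Nat.not_even_iff_odd]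
    intro he
    exact (h.even_gt (by omega) hj.le he).ne' hm
  obtain ⟨i0, hi0, hi0m⟩ := h.att
  have ho := heo i0 hi0 hi0m
  set S := AbsS (2 * K + 4) y m M with hS
  by_cases hA : S.card = K + 3
  · -- case A
    set p : ℕ → Prop := fun j => y j = M ∨ y j = m with hp
    have p0 : p 0 := Or.inl h.y0
    have pn : p (2 * K + 4) := Or.inl h.yn
    have peven : ∀ j ≤ 2 * K + 4, Even j → p j → y j = M := fun j hj he hj' =>
      hj'.resolve_right (h.even_gt (by omega) hj he).ne'
    have podd : ∀ j < 2 * K + 4, Odd j → p j → y j = m := fun j hj he hj' =>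
      hj'.resolve_left (h.odd_lt hj he).ne
    have cardred : ∀ i j : ℕ, j < 2 * K + 4 → p j → (j = i ∨ j = i + 1) → 2 * (S \ {i, i + 1}).card ≤ 2 * K + 4 := by
      intro i j hj hpj hji
      have h1 : S \ {i, i + 1} ⊆ S.erase j := by
        intro x hx
        simp only [Finset.mem_sdiff, Finset.mem_insert, Finset.mem_singleton] at hx
        rw [Finset.mem_erase]
        exact ⟨by omega, hx.1⟩
      have h2 := Finset.card_le_card h1
      rw [Finset.card_erase_of_mem (mem_AbsS.2 ⟨hj, hpj⟩), hA] at h2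
      omega
    -- remaining minimum
    have remain : ∀ j x : ℕ, j < 2 * K + 4 → x < 2 * K + 4 → p j → ¬ p x → (Odd j → Even x) →
        ∃ j' < 2 * K + 4, j' ≠ j ∧ j' ≠ x ∧ y j' = m := by
      intro j x hj hx pj px hpar
      by_cases hje : Even j
      · refine ⟨i0, hi0, ?_, ?_, hi0m⟩
        · rintro rfl; exact (Nat.not_even_iff_odd.2 ho) hje
        · rintro rfl; exact px (Or.inr hi0m)
      · rw [Nat.not_even_iff_odd] at hje
        have hxe := hpar hje
        by_contra hcon
        push Not at hcon
        have hsub : S ⊆ insert j (((Finset.range (K + 2)).image (fun k => 2 * k)).erase x) := by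
          intro z hz
          rw [hS, mem_AbsS] at hz
          rw [Finset.mem_insert, Finset.mem_erase, Finset.mem_image]
          by_cases hzj : z = j
          · exact Or.inl hzj
          · right
            have hzx : z ≠ x := by rintro rfl; exact px hz.2
            refine ⟨hzx, ?_⟩
            by_cases hze : Even z
            · obtain ⟨r, hr⟩ := hze
              exact ⟨r, by rw [Finset.mem_range]; omega, by omega⟩
            · exact absurd (podd z hz.1 (Nat.not_even_iff_odd.1 hze) hz.2) (hcon z hz.1 hzj hzx)
        have h1 := Finset.card_le_card hsub
        have h2 := Finset.card_insert_le j (((Finset.range (K + 2)).image (fun k => 2 * k)).erase x)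
        have h3 : x ∈ (Finset.range (K + 2)).image (fun k => 2 * k) := by
          obtain ⟨r, hr⟩ := hxe
          rw [Finset.mem_image]; exact ⟨r, by rw [Finset.mem_range]; omega, by omega⟩
        rw [Finset.card_erase_of_mem h3] at h2
        have h4 : ((Finset.range (K + 2)).image (fun k => 2 * k)).card ≤ K + 2 := by
          simpa using Finset.card_image_le (s := Finset.range (K + 2)) (f := fun k => 2 * k)
        omega
    by_cases T1 : ∃ j, j + 2 < 2 * K + 4 ∧ p j ∧ p (j + 1) ∧ ¬ p (j + 2)
    · obtain ⟨j, hj, q1, q2, q3⟩ := T1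
      obtain ⟨j', r1, r2, r3, r4⟩ := remain (j + 1) (j + 2) (by omega) hj q2 q3 (by
        intro ho; rw [show j + 2 = j + 1 + 1 from rfl]; exact ho.add_one)
      refine ⟨j + 1, by omega, by omega, Or.inl ?_, ⟨j', r1, r2, r3, r4⟩, cardred _ (j + 1) (by omega) q2 (Or.inl rfl)⟩
      simp only [Nat.add_sub_cancel]
      rw [show j + 1 + 1 = j + 2 from rfl]
      by_cases he : Even j
      · rw [pow_succ, he.neg_one_pow, peven j (by omega) he q1]
        have : y (j + 2) ≠ M := fun hh => q3 (Or.inl hh)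
        have := lt_of_le_of_ne (h.hi (j + 2) (by omega)) this
        linarith
      · rw [Nat.not_even_iff_odd] at he
        rw [pow_succ, he.neg_one_pow, podd j (by omega) he q1]
        have : y (j + 2) ≠ m := fun hh => q3 (Or.inr hh)
        have := lt_of_le_of_ne (h.lo (j + 2) (by omega)) this.symm
        linarith
    by_cases T2 : ∃ j, j + 2 ≤ 2 * K + 4 ∧ ¬ p j ∧ p (j + 1) ∧ p (j + 2)
    · obtain ⟨j, hj, q1, q2, q3⟩ := T2
      have hj0 : j ≠ 0 := by rintro rfl; exact q1 p0
      obtain ⟨j', r1, r2, r3, r4⟩ := remain (j + 1) j (by omega) (by omega) q2 q1 (by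
        intro ho; rw [← Nat.not_odd_iff_even]; intro h'; exact (Nat.not_even_iff_odd.2 ho) h'.add_one)
      refine ⟨j, by omega, by omega, Or.inr ?_, ⟨j', r1, r3, r2, r4⟩, cardred _ (j + 1) (by omega) q2 (Or.inr rfl)⟩
      by_cases he : Even j
      · rw [he.neg_one_pow, peven (j + 2) (by omega) (he.add even_two) q3]
        have : y j ≠ M := fun hh => q1 (Or.inl hh)
        have := lt_of_le_of_ne (h.hi j (by omega)) this
        linarith
      · rw [Nat.not_even_iff_odd] at he
        have hlt : j + 2 < 2 * K + 4 := by
          rcases he with ⟨r, hr⟩; omega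
        rw [he.neg_one_pow, podd (j + 2) hlt (he.add_even even_two) q3]
        have : y j ≠ m := fun hh => q1 (Or.inr hh)
        have := lt_of_le_of_ne (h.lo j (by omega)) this.symm
        linarith
    exfalso
    push Not at T1 T2
    by_cases hadj : ∃ k, k + 1 ≤ 2 * K + 4 ∧ p k ∧ p (k + 1)
    · obtain ⟨k, hk, k1, k2⟩ := hadj
      have fwd : ∀ r, k + r + 1 ≤ 2 * K + 4 → p (k + r) ∧ p (k + r + 1) := by
        intro r
        induction r with
        | zero => intro _; exact ⟨k1, k2⟩
        | succ r ih =>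
          intro hr
          have := ih (by omega)
          refine ⟨this.2, ?_⟩
          rcases (show k + (r + 1) + 1 ≤ 2 * K + 4 from hr).eq_or_lt with h' | h'
          · rw [h']; exact pn
          · exact T1 (k + r) (by omega) this.1 this.2
      have bwd : ∀ r, r ≤ k → p (k - r) ∧ p (k - r + 1) := by
        intro r
        induction r with
        | zero => intro _; exact ⟨k1, k2⟩
        | succ r ih =>
          intro hr
          have := ih (by omega)
          have e1 : k - r = k - (r + 1) + 1 := by omega
          have e2 : k - r + 1 = k - (r + 1) + 2 := by omega
          rw [e2] at this
          rw [e1] at this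
          refine ⟨?_, this.1⟩
          by_contra hc
          exact T2 (k - (r + 1)) (by omega) hc this.1 this.2
      have all : Finset.range (2 * K + 4) ⊆ S := by
        intro z hz
        rw [Finset.mem_range] at hz
        rw [hS, mem_AbsS]
        refine ⟨hz, ?_⟩
        by_cases hzk : z ≤ k
        · have := (bwd (k - z) (by omega)).1
          rwa [show k - (k - z) = z by omega] at this
        · have := (fwd (z - k) (by omega)).1
          rwa [show k + (z - k) = z by omega] at this
      have := Finset.card_le_card all
      rw [Finset.card_range] at this
      omega
    · push Not at hadj
      have : S.card ≤ (Finset.range (K + 2)).card := by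
        apply Finset.card_le_card_of_injOn (fun z => z / 2)
        · intro z hz
          rw [Finset.mem_coe, hS, mem_AbsS] at hz
          rw [Finset.mem_coe, Finset.mem_range]; show z / 2 < K + 2; omega
        · intro a ha b hb hab
          rw [Finset.mem_coe, hS, mem_AbsS] at ha hb
          simp only at hab
          by_contra hne
          rcases Nat.lt_or_gt_of_ne hne with hlt | hlt
          · have : b = a + 1 := by omega
            subst this
            exact hadj a hb.1.le ha.2 hb.2
          · have : a = b + 1 := by omega
            subst this
            exact hadj b ha.1.le hb.2 ha.2
      rw [Finset.card_range] at this
      omega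
  · -- case B
    have hle : ∀ i, 2 * (S \ {i, i + 1}).card ≤ 2 * K + 4 := fun i => by
      have := Finset.card_le_card (Finset.sdiff_subset (s := S) (t := {i, i + 1}))
      omega
    by_cases hne : ∃ k, k ≤ K ∧ y (2 * k + 1) ≠ y (2 * k + 3)
    · obtain ⟨k, hk, hne⟩ := hne
      rcases lt_or_gt_of_ne hne with hlt | hlt
      · refine ⟨2 * k + 2, by omega, by omega, Or.inl ?_, ⟨i0, hi0, ?_, ?_, hi0m⟩, hle _⟩
        · rw [Even.neg_one_pow ⟨k + 1, by omega⟩]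
          have : 2 * k + 2 - 1 = 2 * k + 1 := by omega
          rw [this, show 2 * k + 2 + 1 = 2 * k + 3 from rfl]; linarith
        · rcases ho with ⟨r, hr⟩; omega
        · rintro rfl
          have := h.lo (2 * k + 1) (by omega)
          rw [show 2 * k + 2 + 1 = 2 * k + 3 from rfl] at hi0m
          linarith
      · refine ⟨2 * k + 1, by omega, by omega, Or.inr ?_, ⟨i0, hi0, ?_, ?_, hi0m⟩, hle _⟩
        · rw [Odd.neg_one_pow ⟨k, rfl⟩]
          rw [show 2 * k + 1 + 2 = 2 * k + 3 from rfl]; linarith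
        · rintro rfl
          have := h.lo (2 * k + 3) (by omega)
          linarith
        · rcases ho with ⟨r, hr⟩; omega
    · exfalso
      push Not at hne
      have hall : ∀ k, k ≤ K + 1 → y (2 * k + 1) = y 1 := by
        intro k
        induction k with
        | zero => intro _; rfl
        | succ k ih =>
          intro hk
          rw [← ih (by omega), hne k (by omega)]; rfl
      have hm1 : y 1 = m := by
        obtain ⟨r, hr⟩ := ho
        rw [← hi0m, hr, hall r (by omega)]
      have hsub : insert 0 ((Finset.range (K + 2)).image (fun k => 2 * k + 1)) ⊆ S := by
        intro z hz
        rw [Finset.mem_insert, Finset.mem_image] at hz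
        rw [hS, mem_AbsS]
        rcases hz with rfl | ⟨k, hk, rfl⟩
        · exact ⟨by omega, Or.inl h.y0⟩
        · rw [Finset.mem_range] at hk
          exact ⟨by omega, Or.inr (by rw [hall k (by omega), hm1])⟩
      have h1 := Finset.card_le_card hsub
      rw [Finset.card_insert_of_notMem (by simp), Finset.card_image_of_injective _ (by
        intro a b hab; simp only at hab; omega), Finset.card_range] at h1
      omega

theorem comb : ∀ K y m M, CH (2 * K + 2) y m M → 2 * (AbsS (2 * K + 2) y m M).card ≤ 2 * K + 4 →
    ∃ σ : ℕ → ℝ, (∀ j, σ j = 1 ∨ σ j = -1) ∧ σ 0 = -1 ∧ σ (2 * K + 2) = -1 ∧ Rz (2 * K + 2) y σ := by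
  intro K
  induction K with
  | zero =>
    intro y m M _ _
    refine ⟨fun j => if j = 1 then 1 else -1, ?_, ?_, ?_, ?_⟩
    · intro j; simp only; split_ifs <;> simp
    · simp
    · simp
    · exact rz_base _ _ (by simp) (by simp) (by simp)
  | succ K ih =>
    intro y m M h hs
    obtain ⟨i, h1, h2, h3, h4, h5⟩ := comb_find h (by simpa [mul_add] using hs)
    have hh : CH (2 * K + 2 + 2) y m M := h
    refine comb_red hh h1 h2 h3 (ih _ m M (hh.sk h1 h2 h3 h4) ?_)
    have := AbsS_sk (y := y) (m := m) (M := M) h2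
    have e : AbsS (2 * K + 2 + 2) y m M = AbsS (2 * K + 4) y m M := rfl
    rw [e] at this
    omega


theorem per_encard {Q : ℝ → Prop} (hQ : Function.Periodic Q (2 * Real.pi)) (a : ℝ) :
    {t ∈ Ico a (a + 2 * Real.pi) | Q t}.encard = {t ∈ Ico (0 : ℝ) (2 * Real.pi) | Q t}.encard := by
  have hmod : ∀ a x, Q (toIcoMod two_pi_pos' a x) = Q x := by
    intro a x
    rw [toIcoMod]
    exact hQ.sub_zsmul_eq _
  have hI : InjOn (toIcoMod two_pi_pos' a) {t ∈ Ico (0 : ℝ) (2 * Real.pi) | Q t} := by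
    intro x hx y hy hxy
    have h1 : toIcoMod two_pi_pos' 0 x = x := (toIcoMod_eq_self two_pi_pos').2 (by simpa using hx.1)
    have h2 : toIcoMod two_pi_pos' 0 y = y := (toIcoMod_eq_self two_pi_pos').2 (by simpa using hy.1)
    rw [← h1, ← h2, ← toIcoMod_toIcoMod two_pi_pos' 0 a x, hxy, toIcoMod_toIcoMod]
  rw [← hI.encard_image]
  congr 1
  ext t
  constructor
  · rintro ⟨h1, h2⟩
    refine ⟨toIcoMod two_pi_pos' 0 t, ⟨by simpa using toIcoMod_mem_Ico two_pi_pos' 0 t, by rw [hmod]; exact h2⟩, ?_⟩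
    rw [toIcoMod_toIcoMod]; exact (toIcoMod_eq_self two_pi_pos').2 h1
  · rintro ⟨x, ⟨h1, h2⟩, rfl⟩
    exact ⟨toIcoMod_mem_Ico two_pi_pos' a x, by rw [hmod]; exact h2⟩

theorem not_lmax_of_smono {g : ℝ → ℝ} {b c : ℝ} (hbc : b < c) (h : StrictMonoOn g (Icc b c)) :
    ¬ IsLocalMax g b := by
  intro hm
  have h1 : ∀ᶠ x in 𝓝[>] b, g x ≤ g b := hm.filter_mono nhdsWithin_le_nhds
  have h2 : ∀ᶠ x in 𝓝[>] b, x ∈ Ioo b c := Ioo_mem_nhdsGT hbc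
  obtain ⟨x, hx1, hx2⟩ := (h1.and h2).exists
  exact absurd (h ⟨le_rfl, hbc.le⟩ ⟨hx2.1.le, hx2.2.le⟩ hx2.1) (not_lt.2 hx1)

theorem not_lmin_of_smono {g : ℝ → ℝ} {a b : ℝ} (hab : a < b) (h : StrictMonoOn g (Icc a b)) :
    ¬ IsLocalMin g b := by
  intro hm
  have h1 : ∀ᶠ x in 𝓝[<] b, g b ≤ g x := hm.filter_mono nhdsWithin_le_nhds
  have h2 : ∀ᶠ x in 𝓝[<] b, x ∈ Ioo a b := Ioo_mem_nhdsLT hab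
  obtain ⟨x, hx1, hx2⟩ := (h1.and h2).exists
  exact absurd (h ⟨hx2.1.le, hx2.2.le⟩ ⟨hab.le, le_rfl⟩ hx2.2) (not_lt.2 hx1)

theorem not_extr_of_smono {g : ℝ → ℝ} {a b c s : ℝ} (hs : s = 1 ∨ s = -1) (hab : a < b) (hbc : b < c)
    (h : StrictMonoOn (fun x => s * g x) (Icc a b)) (h' : StrictMonoOn (fun x => s * g x) (Icc b c)) :
    ¬ (IsLocalMax g b ∨ IsLocalMin g b) := by
  rcases hs with rfl | rfl
  · simp only [one_mul] at h h'
    rintro (hm | hm)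
    · exact not_lmax_of_smono hbc h' hm
    · exact not_lmin_of_smono hab h hm
  · rintro (hm | hm)
    · refine not_lmin_of_smono hab h ?_
      have := hm.neg
      simpa only [neg_one_mul] using this
    · refine not_lmax_of_smono hbc h' ?_
      have := hm.neg
      simpa only [neg_one_mul] using this

theorem mono_or_anti {g : ℝ → ℝ} (hg : Continuous g) {a b : ℝ} (hab : a < b)
    (h : ∀ x ∈ Ioo a b, ¬ (IsLocalMax g x ∨ IsLocalMin g x)) :
    ∃ s : ℝ, (s = 1 ∨ s = -1) ∧ StrictMonoOn (fun x => s * g x) (Icc a b) := by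
  have hroll : ∀ x y, x < y → a ≤ x → y ≤ b → g x ≠ g y := by
    intro x y hxy hx hy he
    obtain ⟨c, hc, hce⟩ := exists_isLocalExtr_Ioo hxy hg.continuousOn he
    exact h c ⟨by linarith [hc.1], by linarith [hc.2]⟩ hce.symm
  have hinj : InjOn g (Icc a b) := by
    intro x hx y hy hxy
    by_contra hne
    rcases lt_or_gt_of_ne hne with hl | hl
    · exact hroll x y hl hx.1 hy.2 hxy
    · exact hroll y x hl hy.1 hx.2 hxy.symm
  rcases hg.continuousOn.strictMonoOn_of_injOn_Icc' hab.le hinj with h1 | h1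
  · exact ⟨1, Or.inl rfl, by simpa using h1⟩
  · exact ⟨-1, Or.inr rfl, fun x hx y hy hxy => by have := h1 hx hy hxy; simp only; linarith⟩

theorem per_lmax {g : ℝ → ℝ} (hp : Function.Periodic g (2 * Real.pi)) :
    Function.Periodic (fun t => IsLocalMax g t ∨ IsLocalMin g t) (2 * Real.pi) := by
  intro t
  have key : ∀ (U : ℝ → Prop) , (∀ᶠ x in 𝓝 (t + 2 * Real.pi), U x) ↔ ∀ᶠ x in 𝓝 t, U (x + 2 * Real.pi) := by
    intro U
    rw [← map_add_right_nhds, eventually_map]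
  have e1 : IsLocalMax g (t + 2 * Real.pi) ↔ IsLocalMax g t := by
    unfold IsLocalMax IsMaxFilter
    rw [key]; simp only [hp _]
  have e2 : IsLocalMin g (t + 2 * Real.pi) ↔ IsLocalMin g t := by
    unfold IsLocalMin IsMinFilter
    rw [key]; simp only [hp _]
  simp only [e1, e2]

theorem per_max {g : ℝ → ℝ} (hg : Continuous g) (hp : Function.Periodic g (2 * Real.pi)) :
    ∃ P, ∀ u, g u ≤ g P := by
  obtain ⟨P, _, hP⟩ := (isCompact_Icc (a := (0 : ℝ)) (b := 2 * Real.pi)).exists_isMaxOn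
    (nonempty_Icc.2 two_pi_pos'.le) hg.continuousOn
  refine ⟨P, fun u => ?_⟩
  obtain ⟨y, hy, hxy⟩ := hp.exists_mem_Ico₀ two_pi_pos' u
  rw [hxy]; exact hP (Ico_subset_Icc_self hy)

theorem knotsW {g : ℝ → ℝ} (hg : Continuous g) (hp : Function.Periodic g (2 * Real.pi)) {n s : ℕ} (hn : 0 < n)
    (hT : {t ∈ Ico (0 : ℝ) (2 * Real.pi) | IsLocalMax g t ∨ IsLocalMin g t}.encard = (n : ℕ∞))
    (hS : {t ∈ Ico (0 : ℝ) (2 * Real.pi) | (∀ u : ℝ, g u ≤ g t) ∨ (∀ u : ℝ, g t ≤ g u)}.encard = (s : ℕ∞)) :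
    ∃ K θ m M, n = 2 * K + 2 ∧ Knots θ n ∧
      (∀ j < n, StrictMonoOn (fun x => (-1 : ℝ) ^ (j + 1) * g x) (Icc (θ j) (θ (j + 1)))) ∧
      CH n (fun j => g (θ j)) m M ∧ (AbsS n (fun j => g (θ j)) m M).card = s ∧
      (∀ u, g u ≤ M) ∧ (∀ u, m ≤ g u) ∧ ∀ j ≤ n, deriv g (θ j) = 0 := by
  obtain ⟨P, hP⟩ := per_max hg hp
  obtain ⟨Q0, hQ0⟩ := per_max (g := fun x => - g x) hg.neg (fun x => by simp only [hp x])
  obtain ⟨Q, hQI, hQe⟩ := hp.exists_mem_Ico two_pi_pos' Q0 P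
  have hQ : ∀ u, g Q ≤ g u := fun u => by have := hQ0 u; rw [← hQe]; linarith
  set Ex : ℝ → Prop := fun t => IsLocalMax g t ∨ IsLocalMin g t with hEx
  have hPe : Ex P := Or.inl (Eventually.of_forall hP)
  have hQe' : Ex Q := Or.inr (Eventually.of_forall hQ)
  have hTP : {t ∈ Ico P (P + 2 * Real.pi) | Ex t}.encard = n := by rw [per_encard (per_lmax hp)]; exact hT
  have hSP : {t ∈ Ico P (P + 2 * Real.pi) | (∀ u : ℝ, g u ≤ g t) ∨ (∀ u : ℝ, g t ≤ g u)}.encard = s := by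
    rw [per_encard (Q := fun t => (∀ u : ℝ, g u ≤ g t) ∨ (∀ u : ℝ, g t ≤ g u)) (fun x => by simp only [hp x])]
    exact hS
  have hfin : {t ∈ Ico P (P + 2 * Real.pi) | Ex t}.Finite := finite_of_encard_eq_coe hTP
  set F := hfin.toFinset with hF
  have memF : ∀ x, x ∈ F ↔ x ∈ Ico P (P + 2 * Real.pi) ∧ Ex x := fun x => by
    rw [hF, Finite.mem_toFinset]; rfl
  have hFc : F.card = n := by
    rw [hfin.encard_eq_coe_toFinset_card] at hTP
    exact_mod_cast hTP
  set em := F.orderEmbOfFin hFc with hem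
  have emF : ∀ i, em i ∈ F := fun i => F.orderEmbOfFin_mem hFc i
  have emsur : ∀ x ∈ F, ∃ i, em i = x := by
    intro x hx
    have := F.range_orderEmbOfFin hFc
    have hx' : x ∈ Set.range (F.orderEmbOfFin hFc) := by rw [this]; exact hx
    exact hx'
  set θ : ℕ → ℝ := fun j => if h : j < n then em ⟨j, h⟩ else P + 2 * Real.pi with hθ
  have θlt : ∀ j (h : j < n), θ j = em ⟨j, h⟩ := fun j h => by simp only [hθ, h, dif_pos]
  have θn : θ n = P + 2 * Real.pi := by simp [hθ]
  have θF : ∀ j < n, θ j ∈ F := fun j h => by rw [θlt j h]; exact emF _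
  have θsm : ∀ i j, i < j → j ≤ n → θ i < θ j := by
    intro i j hij hj
    rcases hj.eq_or_lt with h | h
    · rw [h, θn]; exact ((memF _).1 (θF i (by omega))).1.2
    · rw [θlt i (by omega), θlt j h]
      exact em.strictMono (by simpa using hij)
  have θsur : ∀ x ∈ F, ∃ j < n, θ j = x := by
    intro x hx
    obtain ⟨i, hi⟩ := emsur x hx
    exact ⟨i.1, i.2, by rw [θlt i.1 i.2]; exact hi⟩
  have hPF : P ∈ F := (memF P).2 ⟨⟨le_rfl, by linarith [two_pi_pos']⟩, hPe⟩
  have θ0 : θ 0 = P := by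
    obtain ⟨j, hj, hjP⟩ := θsur P hPF
    rcases Nat.eq_zero_or_pos j with h | h
    · rw [← h]; exact hjP
    · have h1 := θsm 0 j h hj.le
      have h2 := ((memF _).1 (θF 0 hn)).1.1
      linarith
  have hk : Knots θ n := ⟨fun i hi => θsm i (i + 1) (by omega) (by omega), by rw [θn, θ0]⟩
  have noex : ∀ j < n, ∀ x ∈ Ioo (θ j) (θ (j + 1)), ¬ Ex x := by
    intro j hj x hx hex
    have hxF : x ∈ F := (memF x).2 ⟨⟨by
      have := hk.le (Nat.zero_le j) hj.le
      rw [θ0] at this; linarith [hx.1], by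
      have := hk.le (show j + 1 ≤ n by omega) le_rfl
      rw [θn] at this; linarith [hx.2]⟩, hex⟩
    obtain ⟨i, hi, rfl⟩ := θsur x hxF
    by_cases hij : i ≤ j
    · linarith [hk.le hij hj.le, hx.1]
    · linarith [hk.le (show j + 1 ≤ i by omega) hi.le, hx.2]
  have hθ1 : ∀ j < n, g (θ j) ≠ g (θ (j + 1)) := by
    intro j hj
    obtain ⟨s, hs, hm⟩ := mono_or_anti hg (hk.lt j hj) (noex j hj)
    have := hm ⟨le_rfl, (hk.lt j hj).le⟩ ⟨(hk.lt j hj).le, le_rfl⟩ (hk.lt j hj)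
    intro he
    simp only [he, lt_irrefl] at this
  have hmon : ∀ j < n, StrictMonoOn (fun x => (-1 : ℝ) ^ (j + 1) * g x) (Icc (θ j) (θ (j + 1))) := by
    intro j
    induction j with
    | zero =>
      intro h0
      obtain ⟨s, hs, hm⟩ := mono_or_anti hg (hk.lt 0 h0) (noex 0 h0)
      rcases hs with rfl | rfl
      · have := hm ⟨le_rfl, (hk.lt 0 h0).le⟩ ⟨(hk.lt 0 h0).le, le_rfl⟩ (hk.lt 0 h0)
        simp only [one_mul, θ0] at this
        exact absurd (hP (θ (0 + 1))) (not_le.2 this)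
      · simpa using hm
    | succ j ih =>
      intro hj
      have h1 := ih (by omega)
      obtain ⟨s, hs, hm⟩ := mono_or_anti hg (hk.lt (j + 1) hj) (noex (j + 1) hj)
      by_cases hss : s = (-1 : ℝ) ^ (j + 1)
      · subst hss
        exact absurd ((memF _).1 (θF (j + 1) hj)).2
          (not_extr_of_smono hs (hk.lt j (by omega)) (hk.lt (j + 1) hj) h1 hm)
      · have : s = (-1 : ℝ) ^ (j + 1 + 1) := by
          rw [pow_succ]
          rcases hs with h | h <;> rcases pow_pm (j + 1) with h' | h' <;> rw [h, h'] at hss <;> simp_all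
        rw [← this]; exact hm
  have hgap : ∀ j < n, 0 < (-1 : ℝ) ^ (j + 1) * (g (θ (j + 1)) - g (θ j)) := by
    intro j hj
    have := hmon j hj ⟨le_rfl, (hk.lt j hj).le⟩ ⟨(hk.lt j hj).le, le_rfl⟩ (hk.lt j hj)
    simp only at this
    linarith
  have gn : g (θ n) = g P := by rw [θn, hp]
  obtain ⟨K, hK⟩ : ∃ K, n = 2 * K + 2 := by
    rcases Nat.even_or_odd n with ⟨r, hr⟩ | ho
    · exact ⟨r - 1, by omega⟩
    · exfalso
      have := hgap (n - 1) (by omega)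
      rw [show n - 1 + 1 = n by omega, ho.neg_one_pow, gn] at this
      linarith [hP (θ (n - 1))]
  have hQF : Q ∈ F := (memF Q).2 ⟨hQI, hQe'⟩
  refine ⟨K, θ, g Q, g P, hK, hk, hmon, ⟨hgap, fun j _ => hQ _, fun j _ => hP _, by simp only [θ0], gn, ?_⟩, ?_, hP, hQ, ?_⟩
  · obtain ⟨j, hj, hjQ⟩ := θsur Q hQF
    exact ⟨j, hj, by rw [hjQ]⟩
  · have hinj : InjOn θ (AbsS n (fun j => g (θ j)) (g Q) (g P) : Set ℕ) := by
      intro a ha b hb hab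
      rw [Finset.mem_coe, mem_AbsS] at ha hb
      by_contra hne
      rcases Nat.lt_or_gt_of_ne hne with h | h
      · exact (θsm a b h hb.1.le).ne hab
      · exact (θsm b a h ha.1.le).ne hab.symm
    have him : θ '' (AbsS n (fun j => g (θ j)) (g Q) (g P) : Set ℕ) =
        {t ∈ Ico P (P + 2 * Real.pi) | (∀ u : ℝ, g u ≤ g t) ∨ (∀ u : ℝ, g t ≤ g u)} := by
      ext t
      constructor
      · rintro ⟨j, hj, rfl⟩
        rw [Finset.mem_coe, mem_AbsS] at hj
        refine ⟨((memF _).1 (θF j hj.1)).1, ?_⟩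
        rcases hj.2 with h | h
        · left; rw [h]; exact hP
        · right; rw [h]; exact hQ
      · rintro ⟨h1, h2⟩
        have htF : t ∈ F := (memF t).2 ⟨h1, by
          rcases h2 with h | h
          · exact Or.inl (Eventually.of_forall h)
          · exact Or.inr (Eventually.of_forall h)⟩
        obtain ⟨j, hj, rfl⟩ := θsur t htF
        refine ⟨j, ?_, rfl⟩
        rw [Finset.mem_coe, mem_AbsS]
        refine ⟨hj, ?_⟩
        rcases h2 with h | h
        · left; exact le_antisymm (hP _) (h _)
        · right; exact le_antisymm (h _) (hQ _)
    rw [← him, hinj.encard_image, encard_coe_eq_coe_finsetCard] at hSP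
    exact_mod_cast hSP
  · intro j hj
    have : Ex (θ j) := by
      rcases hj.eq_or_lt with h | h
      · rw [h]; exact Or.inl (Eventually.of_forall fun u => by rw [gn]; exact hP u)
      · exact ((memF _).1 (θF j h)).2
    rcases this with h | h
    · exact h.deriv_eq_zero
    · exact h.deriv_eq_zero


def e0 : E2 := sphPt 0
def e1 : E2 := sphPt (Real.pi / 2)

theorem e2_decomp (x : E2) : x = x 0 • e0 + x 1 • e1 := by
  ext i; fin_cases i
  · simp [e0, e1, sphPt_zero]
  · simp [e0, e1, sphPt_one]

theorem sphPt_eq (t : ℝ) : sphPt t = Real.cos t • e0 + Real.sin t • e1 := by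
  have := e2_decomp (sphPt t)
  rwa [sphPt_zero, sphPt_one] at this

theorem sphPt_deriv (t : ℝ) : HasDerivAt sphPt ((-Real.sin t) • e0 + Real.cos t • e1) t := by
  have : sphPt = fun t => Real.cos t • e0 + Real.sin t • e1 := funext sphPt_eq
  rw [this]
  exact ((Real.hasDerivAt_cos t).smul_const e0).add ((Real.hasDerivAt_sin t).smul_const e1)

theorem exists_log (u : E2 → ℂ) (hu : Continuous u) (h0 : ∀ x ∈ Metric.closedBall (0 : E2) 1, u x ≠ 0) :
    ∃ L : E2 → ℂ, Continuous L ∧ ∀ x ∈ Metric.closedBall (0 : E2) 1, Complex.exp (L x) = u x := by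
  have hpos : ∀ x : E2, 0 < max 1 ‖x‖ := fun x => lt_max_of_lt_left one_pos
  set ρ : E2 → E2 := fun x => (max 1 ‖x‖)⁻¹ • x with hρ
  have hρc : Continuous ρ :=
    ((continuous_const.max continuous_norm).inv₀ (fun x => (hpos x).ne')).smul continuous_id
  have hρb : ∀ x, ρ x ∈ Metric.closedBall (0 : E2) 1 := by
    intro x
    rw [mem_closedBall_zero_iff, hρ]
    simp only [norm_smul, norm_inv, Real.norm_eq_abs, abs_of_pos (hpos x)]
    rw [inv_mul_le_iff₀ (hpos x), mul_one]
    exact le_max_right _ _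
  have hρi : ∀ x ∈ Metric.closedBall (0 : E2) 1, ρ x = x := by
    intro x hx
    rw [mem_closedBall_zero_iff] at hx
    simp [hρ, max_eq_left hx]
  obtain ⟨F, ⟨_, hF⟩, _⟩ := Complex.isCoveringMapOn_exp.existsUnique_continuousMap_lifts
    (⟨fun x => u (ρ x), hu.comp hρc⟩ : C(E2, ℂ)) (a₀ := 0) (e₀ := Complex.log (u (ρ 0)))
    (Complex.exp_log (h0 _ (hρb 0))) (fun a => h0 _ (hρb a))
  refine ⟨F, F.continuous, fun x hx => ?_⟩
  have := congrFun hF x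
  simp only [Function.comp_apply, ContinuousMap.coe_mk, hρi x hx] at this
  exact this

theorem phase {f : E2 → ℝ} {g : ℝ → ℝ} (hf : ContDiff ℝ (⊤ : ℕ∞) f) (hfg : ∀ t, f (sphPt t) = g t)
    (hnc : ∀ x ∈ Metric.closedBall (0 : E2) 1, fderiv ℝ f x ≠ 0) :
    ∃ ψ R : ℝ → ℝ, Continuous ψ ∧ (∀ t, 0 < R t) ∧ (∀ t, ψ (t + 2 * Real.pi) = ψ t - 2 * Real.pi) ∧
      (∀ t, deriv g t = R t * Real.sin (ψ t)) ∧
      ∀ t, fderiv ℝ f (sphPt t) (sphPt t) = R t * Real.cos (ψ t) := by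
  have hD : Continuous (fderiv ℝ f) := hf.continuous_fderiv (by simp)
  set u : E2 → ℂ := fun x => ((fderiv ℝ f x e0 : ℝ) : ℂ) + ((fderiv ℝ f x e1 : ℝ) : ℂ) * Complex.I with hu
  have huc : Continuous u := by
    have h1 : Continuous fun x => fderiv ℝ f x e0 := hD.clm_apply continuous_const
    have h2 : Continuous fun x => fderiv ℝ f x e1 := hD.clm_apply continuous_const
    exact (Complex.continuous_ofReal.comp h1).add ((Complex.continuous_ofReal.comp h2).mul continuous_const)
  have hre : ∀ x, (u x).re = fderiv ℝ f x e0 := fun x => by simp [hu]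
  have him : ∀ x, (u x).im = fderiv ℝ f x e1 := fun x => by simp [hu]
  obtain ⟨L, hL, hLu⟩ := exists_log u huc (by
    intro x hx h
    apply hnc x hx
    ext v
    rw [e2_decomp v, map_add, map_smul, map_smul, ← hre, ← him, h]; simp)
  have hsc : Continuous sphPt := continuous_iff_continuousAt.2 fun t => (sphPt_deriv t).continuousAt
  have hin : ∀ t, sphPt t ∈ Metric.closedBall (0 : E2) 1 := fun t => by
    rw [mem_closedBall_zero_iff, sphPt_norm]
  have hsp : ∀ t, sphPt (t + 2 * Real.pi) = sphPt t := fun t => by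
    rw [sphPt_eq, sphPt_eq, Real.cos_add_two_pi, Real.sin_add_two_pi]
  have hdiff : Differentiable ℝ f := hf.differentiable (by simp)
  have a0 : ∀ t, fderiv ℝ f (sphPt t) e0 = Real.exp (L (sphPt t)).re * Real.cos (L (sphPt t)).im := fun t => by
    rw [← hre, ← hLu _ (hin t), Complex.exp_re]
  have a1 : ∀ t, fderiv ℝ f (sphPt t) e1 = Real.exp (L (sphPt t)).re * Real.sin (L (sphPt t)).im := fun t => by
    rw [← him, ← hLu _ (hin t), Complex.exp_im]
  refine ⟨fun t => (L (sphPt t)).im - t, fun t => Real.exp (L (sphPt t)).re, ?_, fun t => Real.exp_pos _, ?_, ?_, ?_⟩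
  · exact (Complex.continuous_im.comp (hL.comp hsc)).sub continuous_id
  · intro t; simp only [hsp]; ring
  · intro t
    have h1 : HasDerivAt (fun t => f (sphPt t)) _ t :=
      ((hdiff (sphPt t)).hasFDerivAt).comp_hasDerivAt t (sphPt_deriv t)
    have h2 : (fun t => f (sphPt t)) = g := funext hfg
    rw [h2] at h1
    rw [h1.deriv, map_add, map_smul, map_smul, a0, a1, Real.sin_sub, smul_eq_mul, smul_eq_mul]; ring
  · intro t
    have : fderiv ℝ f (sphPt t) (sphPt t) = Real.cos t * fderiv ℝ f (sphPt t) e0 + Real.sin t * fderiv ℝ f (sphPt t) e1 := by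
      conv_lhs => rw [sphPt_eq t]
      rw [map_add, map_smul, map_smul, smul_eq_mul, smul_eq_mul, ← sphPt_eq t]
    rw [this, a0, a1, Real.cos_sub]; ring

theorem ball_max {f : E2 → ℝ} (hf : ContDiff ℝ (⊤ : ℕ∞) f)
    (hnc : ∀ x ∈ Metric.closedBall (0 : E2) 1, fderiv ℝ f x ≠ 0) {M : ℝ} (hM : ∀ t, f (sphPt t) ≤ M) :
    ∀ x ∈ Metric.closedBall (0 : E2) 1, f x ≤ M := by
  obtain ⟨x0, hx0, hmax⟩ := (isCompact_closedBall (0 : E2) 1).exists_isMaxOn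
    ⟨0, by simp⟩ hf.continuous.continuousOn
  have hle : f x0 ≤ M := by
    by_cases h : ‖x0‖ < 1
    · exfalso
      apply hnc x0 hx0
      apply IsLocalMax.fderiv_eq_zero
      apply hmax.isLocalMax
      exact Filter.mem_of_superset (Metric.isOpen_ball.mem_nhds (by simpa using h)) Metric.ball_subset_closedBall
    · rw [mem_closedBall_zero_iff] at hx0
      have : ‖x0‖ = 1 := le_antisymm hx0 (not_lt.1 h)
      have e := eq_smul_sphPt x0
      rw [this, one_smul] at e
      rw [e]; exact hM _
  exact fun x hx => (hmax hx).trans hle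

theorem radial_nonneg {f : E2 → ℝ} (hf : ContDiff ℝ (⊤ : ℕ∞) f) {t : ℝ}
    (h : ∀ x ∈ Metric.closedBall (0 : E2) 1, f x ≤ f (sphPt t)) : 0 ≤ fderiv ℝ f (sphPt t) (sphPt t) := by
  have hl : HasDerivAt (fun r : ℝ => r • sphPt t) (sphPt t) 1 := by
    simpa using (hasDerivAt_id (1 : ℝ)).smul_const (sphPt t)
  have hd : HasDerivAt (fun r : ℝ => f (r • sphPt t)) (fderiv ℝ f (sphPt t) (sphPt t)) 1 := by
    have h1 : HasFDerivAt f (fderiv ℝ f (sphPt t)) ((fun r : ℝ => r • sphPt t) 1) := by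
      simpa using ((hf.differentiable (by simp)) (sphPt t)).hasFDerivAt
    exact h1.comp_hasDerivAt 1 hl
  by_contra hneg
  push Not at hneg
  have h2 := hd.tendsto_slope
  have h3 : Tendsto (slope (fun r : ℝ => f (r • sphPt t)) 1) (𝓝[<] 1) (𝓝 (fderiv ℝ f (sphPt t) (sphPt t))) :=
    h2.mono_left (nhdsWithin_mono _ (fun x hx => ne_of_lt hx))
  have h4 : ∀ᶠ r in 𝓝[<] (1 : ℝ), slope (fun r : ℝ => f (r • sphPt t)) 1 r < 0 := h3.eventually (gt_mem_nhds hneg)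
  have h5 : ∀ᶠ r in 𝓝[<] (1 : ℝ), r ∈ Ioo (0 : ℝ) 1 := Ioo_mem_nhdsLT one_pos
  obtain ⟨r, hr1, hr2⟩ := (h4.and h5).exists
  rw [slope_def_field, one_smul] at hr1
  have h6 := h (r • sphPt t) (by
    rw [mem_closedBall_zero_iff, norm_smul, sphPt_norm, mul_one, Real.norm_eq_abs, abs_of_pos hr2.1]
    exact hr2.2.le)
  have h7 : 0 ≤ (f (r • sphPt t) - f (sphPt t)) / (r - 1) :=
    div_nonneg_of_nonpos (by linarith) (by linarith [hr2.2])
  linarith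

theorem cross_even {ψ : ℝ → ℝ} (hψ : Continuous ψ) {a b : ℝ} {A B : ℤ}
    (h : ∀ t ∈ uIcc a b, Real.sin (ψ t) ≤ 0) (hA : ψ a = A * Real.pi) (hB : ψ b = B * Real.pi) :
    B + B % 2 ≤ A + A % 2 := by
  by_contra hc
  push Not at hc
  obtain ⟨q, hq⟩ : ∃ q, A + A % 2 = 2 * q := ⟨(A + A % 2) / 2, by omega⟩
  have h1 : A ≤ 2 * q := by omega
  have h2 : 2 * q + 1 ≤ B := by omega
  have h1' : (A : ℝ) ≤ 2 * q := by exact_mod_cast h1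
  have h2' : (2 : ℝ) * q + 1 ≤ B := by exact_mod_cast h2
  have hpi := Real.pi_pos
  have : Real.pi / 2 + q * (2 * Real.pi) ∈ uIcc (ψ a) (ψ b) := by
    rw [hA, hB]; apply Icc_subset_uIcc; constructor <;> nlinarith
  obtain ⟨t, ht, hte⟩ := intermediate_value_uIcc hψ.continuousOn this
  have := h t ht
  rw [hte, Real.sin_add_int_mul_two_pi, Real.sin_pi_div_two] at this
  linarith

theorem cross_odd {ψ : ℝ → ℝ} (hψ : Continuous ψ) {a b : ℝ} {A B : ℤ}
    (h : ∀ t ∈ uIcc a b, 0 ≤ Real.sin (ψ t)) (hA : ψ a = A * Real.pi) (hB : ψ b = B * Real.pi) :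
    B - B % 2 ≤ A - A % 2 := by
  by_contra hc
  push Not at hc
  obtain ⟨q, hq⟩ : ∃ q, A - A % 2 = 2 * q := ⟨(A - A % 2) / 2, by omega⟩
  have h1 : A ≤ 2 * q + 1 := by omega
  have h2 : 2 * q + 2 ≤ B := by omega
  have h1' : (A : ℝ) ≤ 2 * q + 1 := by exact_mod_cast h1
  have h2' : (2 : ℝ) * q + 2 ≤ B := by exact_mod_cast h2
  have hpi := Real.pi_pos
  have : Real.pi / 2 + Real.pi + q * (2 * Real.pi) ∈ uIcc (ψ a) (ψ b) := by
    rw [hA, hB]; apply Icc_subset_uIcc; constructor <;> nlinarith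
  obtain ⟨t, ht, hte⟩ := intermediate_value_uIcc hψ.continuousOn this
  have := h t ht
  rw [hte, Real.sin_add_int_mul_two_pi, Real.sin_add_pi, Real.sin_pi_div_two] at this
  linarith

theorem sum_pairs (f : ℕ → ℤ) (N : ℕ) :
    ∑ j ∈ Finset.range (2 * N), f j = ∑ k ∈ Finset.range N, (f (2 * k) + f (2 * k + 1)) := by
  induction N with
  | zero => simp
  | succ N ih =>
    rw [show 2 * (N + 1) = 2 * N + 1 + 1 by ring, Finset.sum_range_succ, Finset.sum_range_succ, ih,
      Finset.sum_range_succ]; ring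

theorem neccond {f : E2 → ℝ} {g : ℝ → ℝ} (hf : ContDiff ℝ (⊤ : ℕ∞) f) (hfg : ∀ t, f (sphPt t) = g t)
    (hnc : ∀ x ∈ Metric.closedBall (0 : E2) 1, fderiv ℝ f x ≠ 0) {K : ℕ} {θ : ℕ → ℝ} {m M : ℝ}
    (hk : Knots θ (2 * K + 2))
    (hmon : ∀ j < 2 * K + 2, StrictMonoOn (fun x => (-1 : ℝ) ^ (j + 1) * g x) (Icc (θ j) (θ (j + 1))))
    (hCH : CH (2 * K + 2) (fun j => g (θ j)) m M) (hgd : Differentiable ℝ g)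
    (hM : ∀ u, g u ≤ M) (hm : ∀ u, m ≤ g u) (hd : ∀ j ≤ 2 * K + 2, deriv g (θ j) = 0) :
    2 * (AbsS (2 * K + 2) (fun j => g (θ j)) m M).card ≤ 2 * K + 4 := by
  obtain ⟨ψ, R, hψ, hR, hψp, hsin, hcos⟩ := phase hf hfg hnc
  -- knots are multiples of pi
  have hmul : ∀ j, ∃ A : ℤ, j ≤ 2 * K + 2 → ψ (θ j) = A * Real.pi := by
    intro j
    by_cases hj : j ≤ 2 * K + 2
    · have h1 := hsin (θ j)
      rw [hd j hj] at h1
      have h2 := (mul_eq_zero.1 h1.symm).resolve_left (hR _).ne'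
      obtain ⟨A, hA⟩ := Real.sin_eq_zero_iff.1 h2
      exact ⟨A, fun _ => hA.symm⟩
    · exact ⟨0, fun h => absurd h hj⟩
  choose A hA using hmul
  have hsign : ∀ j < 2 * K + 2, ∀ t ∈ Icc (θ j) (θ (j + 1)), 0 ≤ (-1 : ℝ) ^ (j + 1) * Real.sin (ψ t) := by
    intro j hj t ht
    have h1 : 0 ≤ (-1 : ℝ) ^ (j + 1) * deriv g t := by
      rcases ht.1.eq_or_lt with h | h
      · rw [← h, hd j (by omega)]; simp
      rcases ht.2.eq_or_lt with h' | h'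
      · rw [h', hd (j + 1) (by omega)]; simp
      have e : deriv (fun x => (-1 : ℝ) ^ (j + 1) * g x) t = (-1 : ℝ) ^ (j + 1) * deriv g t :=
        ((hgd t).hasDerivAt.const_mul _).deriv
      rw [← e]
      have := ((hmon j hj).monotoneOn).derivWithin_nonneg (x := t)
      rwa [derivWithin_of_mem_nhds (Icc_mem_nhds h h')] at this
    rw [hsin] at h1
    by_contra hc
    push Not at hc
    have := mul_pos_of_neg_of_neg hc (neg_neg_of_pos (hR t))
    nlinarith
  have hev : ∀ k ≤ K, A (2 * k) + A (2 * k) % 2 = A (2 * k + 1) + A (2 * k + 1) % 2 := by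
    intro k hk'
    have hs : ∀ t ∈ uIcc (θ (2 * k)) (θ (2 * k + 1)), Real.sin (ψ t) ≤ 0 := by
      intro t ht
      rw [uIcc_of_le (hk.lt _ (by omega)).le] at ht
      have := hsign (2 * k) (by omega) t ht
      rw [Odd.neg_one_pow ⟨k, rfl⟩] at this
      linarith
    apply le_antisymm
    · exact cross_even hψ (by rw [uIcc_comm]; exact hs) (hA (2 * k + 1) (by omega)) (hA (2 * k) (by omega))
    · exact cross_even hψ hs (hA (2 * k) (by omega)) (hA (2 * k + 1) (by omega))
  have hod : ∀ k ≤ K, A (2 * k + 1) - A (2 * k + 1) % 2 = A (2 * k + 2) - A (2 * k + 2) % 2 := by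
    intro k hk'
    have hs : ∀ t ∈ uIcc (θ (2 * k + 1)) (θ (2 * k + 2)), 0 ≤ Real.sin (ψ t) := by
      intro t ht
      rw [uIcc_of_le (hk.lt _ (by omega)).le] at ht
      have := hsign (2 * k + 1) (by omega) t ht
      rw [Even.neg_one_pow ⟨k + 1, by omega⟩] at this
      linarith
    apply le_antisymm
    · exact cross_odd hψ (by rw [uIcc_comm]; exact hs) (hA (2 * k + 2) (by omega)) (hA (2 * k + 1) (by omega))
    · exact cross_odd hψ hs (hA (2 * k + 1) (by omega)) (hA (2 * k + 2) (by omega))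
  have htel : ∀ i ≤ K + 1, A (2 * i) - A (2 * i) % 2 = A 0 - A 0 % 2 +
      2 * ∑ k ∈ Finset.range i, (A (2 * k) % 2 - A (2 * k + 1) % 2) := by
    intro i
    induction i with
    | zero => intro _; simp
    | succ i ih =>
      intro hi
      have h1 := ih (by omega)
      have h2 := hev i (by omega)
      have h3 := hod i (by omega)
      rw [Finset.sum_range_succ, show 2 * (i + 1) = 2 * i + 2 by ring]
      linarith
  have hAn : A (2 * K + 2) = A 0 - 2 := by
    have h1 := hA (2 * K + 2) le_rfl
    rw [hk.tot, hψp, hA 0 (by omega)] at h1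
    have h2 : ((A (2 * K + 2) : ℤ) : ℝ) * Real.pi = ((A 0 - 2 : ℤ) : ℝ) * Real.pi := by push_cast; linarith
    exact_mod_cast mul_right_cancel₀ Real.pi_ne_zero h2
  have hsum := htel (K + 1) le_rfl
  rw [show 2 * (K + 1) = 2 * K + 2 by ring, hAn] at hsum
  have hsum' : ∑ k ∈ Finset.range (K + 1), (A (2 * k) % 2 - A (2 * k + 1) % 2) = -1 := by omega
  -- absolute extrema
  have hcospos : ∀ j ≤ 2 * K + 2, g (θ j) = M → 0 ≤ Real.cos (ψ (θ j)) := by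
    intro j hj he
    have h1 := radial_nonneg hf (t := θ j) (by
      rw [hfg, he]; exact ball_max hf hnc (fun t => by rw [hfg]; exact hM t))
    rw [hcos] at h1
    exact nonneg_of_mul_nonneg_right h1 (hR _)
  have hcosneg : ∀ j ≤ 2 * K + 2, g (θ j) = m → Real.cos (ψ (θ j)) ≤ 0 := by
    intro j hj he
    have hfn : ∀ x, fderiv ℝ (fun x => - f x) x = - fderiv ℝ f x := fun x => fderiv_fun_neg
    have h1 := radial_nonneg (f := fun x => - f x) hf.neg (t := θ j) (by
      rw [hfg, he]
      exact ball_max hf.neg (fun x hx => by rw [hfn]; exact neg_ne_zero.2 (hnc x hx))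
        (fun t => by rw [hfg]; linarith [hm t]))
    rw [hfn, neg_apply, hcos] at h1
    by_contra hc
    push Not at hc
    have := mul_pos (hR (θ j)) hc
    linarith
  have hpar0 : ∀ j ≤ 2 * K + 2, g (θ j) = M → A j % 2 = 0 := by
    intro j hj he
    have h1 := hcospos j hj he
    rw [hA j hj, Real.cos_int_mul_pi] at h1
    rcases Int.even_or_odd (A j) with h | h
    · exact Int.even_iff.1 h
    · rw [h.neg_one_zpow] at h1; norm_num at h1
  have hpar1 : ∀ j ≤ 2 * K + 2, g (θ j) = m → A j % 2 = 1 := by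
    intro j hj he
    have h1 := hcosneg j hj he
    rw [hA j hj, Real.cos_int_mul_pi] at h1
    rcases Int.even_or_odd (A j) with h | h
    · rw [h.neg_one_zpow] at h1; norm_num at h1
    · exact Int.odd_iff.1 h
  have hcard : ((AbsS (2 * K + 2) (fun j => g (θ j)) m M).card : ℤ) ≤
      ∑ k ∈ Finset.range (K + 1), (1 - (A (2 * k) % 2 - A (2 * k + 1) % 2)) := by
    classical
    have e : ((AbsS (2 * K + 2) (fun j => g (θ j)) m M).card : ℤ) =
        ∑ j ∈ Finset.range (2 * (K + 1)), if g (θ j) = M ∨ g (θ j) = m then (1 : ℤ) else 0 := by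
      rw [show 2 * (K + 1) = 2 * K + 2 by ring, Finset.sum_boole, AbsS]
    rw [e, sum_pairs]
    apply Finset.sum_le_sum
    intro k hk'
    rw [Finset.mem_range] at hk'
    have b1 : (if g (θ (2 * k)) = M ∨ g (θ (2 * k)) = m then (1 : ℤ) else 0) ≤ 1 - A (2 * k) % 2 := by
      split_ifs with h
      · have h1 := h.resolve_right (hCH.even_gt (by omega) (by omega) ⟨k, by omega⟩).ne'
        rw [hpar0 _ (by omega) h1]; norm_num
      · omega
    have b2 : (if g (θ (2 * k + 1)) = M ∨ g (θ (2 * k + 1)) = m then (1 : ℤ) else 0) ≤ A (2 * k + 1) % 2 := by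
      split_ifs with h
      · have h1 := h.resolve_left (hCH.odd_lt (by omega) ⟨k, by omega⟩).ne
        rw [hpar1 _ (by omega) h1]
      · omega
    linarith
  rw [Finset.sum_sub_distrib, hsum'] at hcard
  simp at hcard
  omega

end Helpers

/-- Let `φ : S¹ → ℝ` be C^∞ (encoded by the 2π-periodic smooth `g = φ ∘ (cos, sin)`), having
exactly `n` local extremum points on the circle (`n` finite and positive), of which exactly
`s` are absolute extrema. Then every smooth extension of `φ` has a critical point in the
closed unit disk iff `s > n/2 + 1` (equivalently, `n + 2 < 2s`). Coinciding critical values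
of `φ` are allowed. -/
theorem stmt_16 (g : ℝ → ℝ) (hg : ContDiff ℝ (⊤ : ℕ∞) g)
    (hper : Function.Periodic g (2 * Real.pi)) (n s : ℕ) (hn : 0 < n)
    (hT : {t ∈ Set.Ico (0 : ℝ) (2 * Real.pi) |
      IsLocalMax g t ∨ IsLocalMin g t}.encard = (n : ℕ∞))
    (hS : {t ∈ Set.Ico (0 : ℝ) (2 * Real.pi) |
      (∀ u : ℝ, g u ≤ g t) ∨ (∀ u : ℝ, g t ≤ g u)}.encard = (s : ℕ∞)) :
    (∀ f : E2 → ℝ, ContDiff ℝ (⊤ : ℕ∞) f → (∀ t : ℝ, f (sphPt t) = g t) →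
      ∃ x ∈ Metric.closedBall (0 : E2) 1, fderiv ℝ f x = 0) ↔ n + 2 < 2 * s := by
  obtain ⟨K, θ, m, M, hK, hk, hmon, hCH, hcard, hM, hm, hd⟩ := knotsW hg.continuous hper hn hT hS
  subst hK
  constructor
  · intro H
    by_contra hc
    obtain ⟨σ, s1, s2, s3, s4⟩ := comb K _ m M hCH (by omega)
    obtain ⟨w, hw⟩ := rz_init hg hper hk hmon s1 (by rw [s2, s3]) s4
    obtain ⟨f, f1, f2, f3⟩ := fl_extend hw
    obtain ⟨x, hx, hx0⟩ := H f f1 f2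
    exact f3 x hx hx0
  · intro hlt f hf hfg
    by_contra hc
    have hc' : ∀ x ∈ Metric.closedBall (0 : E2) 1, fderiv ℝ f x ≠ 0 :=
      fun x hx h0 => hc ⟨x, hx, h0⟩
    have := neccond hf hfg hc' hk hmon hCH (hg.differentiable (by simp)) hM hm hd
    omega
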